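/- arXiv:1810.02879 — 3 statements merged into one kernel-verified Lean document; each statement's English description precedes it below -/
import Mathlib

section
/- (Radial L²_t L^q_x Strichartz estimates.) Let u₀, u₁ be radially symmetric and let u solve the free wave equation u_tt − Δu = 0 on ℝ × ℝ³ with u(0) = u₀, u_t(0) = u₁. If q > 4 and s satisfies 1/2 + 3/q = 3/2 − s, then ‖u‖_{L²_t L^q_x(ℝ×ℝ³)} ≤ C(q) (‖u₀‖_{Ḣ^s(ℝ³)} + ‖u₁‖_{Ḣ^{s−1}(ℝ³)}). -/
open MeasureTheory Real Set Filter Topology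
open scoped FourierTransform ENNReal NNReal

noncomputable section

abbrev E3 := EuclideanSpace ℝ (Fin 3)

/-- A function on `ℝ³` is radially symmetric. -/
def IsRadial (f : E3 → ℝ) : Prop := ∀ x y : E3, ‖x‖ = ‖y‖ → f x = f y

/-- The homogeneous Sobolev norm `‖f‖_{Ḣ^s(ℝ³)} = ‖ |ξ|^s f̂(ξ) ‖_{L²}`. -/
def sobNorm (s : ℝ) (f : E3 → ℝ) : ℝ≥0∞ :=
  (∫⁻ ξ : E3, ENNReal.ofReal (‖ξ‖ ^ (2 * s)) *
      (‖𝓕 (fun x => (f x : ℂ)) ξ‖₊ : ℝ≥0∞) ^ (2 : ℝ)) ^ (1 / 2 : ℝ)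

/-- Membership in the homogeneous Sobolev space `Ḣ^s(ℝ³)`. -/
def MemSob (s : ℝ) (f : E3 → ℝ) : Prop := sobNorm s f < ⊤

/-- The critical Sobolev exponent `s_c = 3/2 - 2/(p-1)`. -/
def sCrit (p : ℝ) : ℝ := 3 / 2 - 2 / (p - 1)

/-- Time derivative `∂_t u`. -/
def timeDeriv {α : Type*} (u : ℝ → α → ℝ) : ℝ → α → ℝ := fun t x => deriv (fun s => u s x) t

/-- Second time derivative `∂_tt u`. -/
def timeDeriv2 {α : Type*} (u : ℝ → α → ℝ) : ℝ → α → ℝ := timeDeriv (timeDeriv u)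

/-- The Laplacian on `ℝ³`, as the sum of second partial derivatives. -/
def lap (f : E3 → ℝ) (x : E3) : ℝ :=
  ∑ i : Fin 3, iteratedFDeriv ℝ 2 f x ![EuclideanSpace.single i (1 : ℝ), EuclideanSpace.single i (1 : ℝ)]

/-- `u` solves the defocusing nonlinear wave equation `u_tt - Δu + |u|^{p-1}u = 0`
for times `t ∈ I`. -/
def IsNLWSol (p : ℝ) (I : Set ℝ) (u : ℝ → E3 → ℝ) : Prop :=
  ∀ t ∈ I, ∀ x : E3, timeDeriv2 u t x - lap (u t) x + |u t x| ^ (p - 1) * u t x = 0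

/-- The Fourier multiplier symbol of the free wave propagator
`S(t)(f,g) = cos(t√(-Δ)) f + (sin(t√(-Δ))/√(-Δ)) g`. -/
def waveSymbol (t : ℝ) (f g : E3 → ℝ) (ξ : E3) : ℂ :=
  (Real.cos (2 * π * t * ‖ξ‖) : ℂ) * 𝓕 (fun x => (f x : ℂ)) ξ +
    (if ‖ξ‖ = 0 then (t : ℂ) else ((Real.sin (2 * π * t * ‖ξ‖) / (2 * π * ‖ξ‖) : ℝ) : ℂ)) *
      𝓕 (fun x => (g x : ℂ)) ξ

/-- The free wave propagator `S(t)(f,g)`. -/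
def waveProp (t : ℝ) (f g : E3 → ℝ) : E3 → ℝ := fun x => (𝓕⁻ (waveSymbol t f g) x).re

/-- The time derivative `∂_t S(t)(f,g)` of the free wave propagator. -/
def wavePropDt (t : ℝ) (f g : E3 → ℝ) : E3 → ℝ := fun x => deriv (fun t' => waveProp t' f g x) t

/-- `u` scatters (along the filter `l`, i.e. forward `atTop` or backward `atBot` in time) to a
free wave with data in `Ḣ^{s_c} × Ḣ^{s_c - 1}`. -/
def ScattersAt (p : ℝ) (u : ℝ → E3 → ℝ) (l : Filter ℝ) : Prop :=
  ∃ f g : E3 → ℝ, MemSob (sCrit p) f ∧ MemSob (sCrit p - 1) g ∧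
    Filter.Tendsto
      (fun t => sobNorm (sCrit p) (fun x => u t x - waveProp t f g x) +
        sobNorm (sCrit p - 1) (fun x => timeDeriv u t x - wavePropDt t f g x)) l (nhds 0)

/-- The space-time Lebesgue norm `‖u‖_{L^q_{t,x}(I × ℝ³)}`. -/
def stNorm (q : ℝ) (I : Set ℝ) (u : ℝ → E3 → ℝ) : ℝ≥0∞ :=
  eLpNorm (fun z : ℝ × E3 => u z.1 z.2) (ENNReal.ofReal q) ((volume.restrict I).prod volume)

/-- The mixed space-time norm `‖u‖_{L^{pt}_t L^{qx}_x(I × ℝ³)}`. -/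
def mixNorm (pt qx : ℝ≥0∞) (I : Set ℝ) (u : ℝ → E3 → ℝ) : ℝ≥0∞ :=
  if pt = ⊤ then essSup (fun t => eLpNorm (u t) qx volume) (volume.restrict I)
  else (∫⁻ t in I, eLpNorm (u t) qx volume ^ pt.toReal) ^ (1 / pt.toReal)

/-- The dual (conjugate) exponent of `a ∈ [1,∞]`. -/
def dualExp (a : ℝ≥0∞) : ℝ≥0∞ := 1 + (a - 1)⁻¹

/-- The energy of `u` at time `t`. -/
def energy (p : ℝ) (u : ℝ → E3 → ℝ) (t : ℝ) : ℝ :=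
  (1 / 2) * (∫ x : E3, (timeDeriv u t x) ^ 2) +
    (1 / 2) * (∫ x : E3, ‖fderiv ℝ (u t) x‖ ^ 2) +
    (1 / (p + 1)) * ∫ x : E3, |u t x| ^ (p + 1)

/-- The Littlewood–Paley projection onto frequencies `|ξ| ≤ N`, given by convolution with
`N³ ψ(N ·)`. -/
def lpLe (ψ : E3 → ℝ) (N : ℝ) (f : E3 → ℝ) : E3 → ℝ :=
  fun x => ∫ y : E3, N ^ 3 * ψ (N • (x - y)) * f y

/-- `ψ` is an admissible Littlewood–Paley kernel: radial, total integral one, and its Fourier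
transform is a bump equal to `1` near the origin. -/
def IsLPKernel (ψ : E3 → ℝ) : Prop :=
  IsRadial ψ ∧ (∫ x : E3, ψ x) = 1 ∧
    (∀ ξ : E3, ‖ξ‖ ≤ 1 → 𝓕 (fun x => (ψ x : ℂ)) ξ = 1) ∧
    (∀ ξ : E3, 2 ≤ ‖ξ‖ → 𝓕 (fun x => (ψ x : ℂ)) ξ = 0)


/-- The hyperbolic-coordinates unknown `ũ(τ,s) = (e^τ sinh s / s) u(e^τ cosh s, e^τ sinh s)`,
for a radial function `u = u(t,r)`. -/
def hypU (U : ℝ → ℝ → ℝ) : ℝ → ℝ → ℝ := fun τ s =>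
  (Real.exp τ * Real.sinh s / s) * U (Real.exp τ * Real.cosh s) (Real.exp τ * Real.sinh s)

/-- The hyperbolic energy of `ũ` at hyperbolic time `τ`. -/
def hypEnergy (p : ℝ) (v : ℝ → ℝ → ℝ) (τ : ℝ) : ℝ :=
  (1 / 2) * (∫ s in Set.Ioi (0 : ℝ), (deriv (v τ) s) ^ 2 * s ^ 2) +
    (1 / 2) * (∫ s in Set.Ioi (0 : ℝ), (timeDeriv v τ s) ^ 2 * s ^ 2) +
    (1 / (p + 1)) * ∫ s in Set.Ioi (0 : ℝ),
      Real.exp (-(p - 3) * τ) * (s / Real.sinh s) ^ (p - 1) * |v τ s| ^ (p + 1) * s ^ 2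


open scoped SchwartzMap in
lemma plancherel_aux (k : ℝ → ℂ) (hk : Continuous k) (hc : HasCompactSupport k) :
    ∫⁻ y, ‖𝓕⁻ k y‖ₑ ^ (2:ℝ) = ∫⁻ y, ‖k y‖ₑ ^ (2:ℝ) := by
  have hint : Integrable k := hk.integrable_of_hasCompactSupport hc
  have hmem : MemLp k 2 (volume : Measure ℝ) := hk.memLp_of_hasCompactSupport hc
  set K : Lp ℂ 2 (volume : Measure ℝ) := hmem.toLp k with hK
  have hcont : Continuous (𝓕⁻ k) := by
    have := VectorFourier.fourierIntegral_continuous (L := -(innerₗ ℝ)) Real.continuous_fourierChar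
      (by simp; fun_prop) hint
    refine this.congr fun x => ?_
    rw [Real.fourierInv_eq]
    simp [VectorFourier.fourierIntegral]
  have key : ∀ᵐ x, (𝓕⁻ K : Lp ℂ 2 (volume : Measure ℝ)) x = 𝓕⁻ k x := by
    apply ae_eq_of_integral_contDiff_smul_eq
    · exact (Lp.memLp _).locallyIntegrable (by norm_num)
    · exact hcont.locallyIntegrable
    · intro g hg hgc
      have hg' : ContDiff ℝ (⊤ : ℕ∞) (fun x => (g x : ℂ)) := Complex.ofRealCLM.contDiff.comp hg
      have hgc' : HasCompactSupport (fun x => (g x : ℂ)) := hgc.comp_left (g := fun x : ℝ => (x:ℂ)) (by simp)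
      let G : 𝓢(ℝ, ℂ) := hgc'.toSchwartzMap hg'
      have e1 := congrArg (fun T => T G) (Lp.fourierInv_toTemperedDistribution_eq K)
      simp only [TemperedDistribution.fourierInv_apply, Lp.toTemperedDistribution_apply] at e1
      have e2 : ∫ x, g x • (𝓕⁻ K : Lp ℂ 2 (volume : Measure ℝ)) x = ∫ x, (𝓕⁻ G) x • K x := by
        rw [e1]; rfl
      rw [e2]
      have e3 : ∫ x, (𝓕⁻ G) x • K x = ∫ x, (𝓕⁻ G) x • k x := by
        apply integral_congr_ae
        filter_upwards [hmem.coeFn_toLp] with x hx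
        rw [hx]
      rw [e3]
      have e4 : ∀ x, 𝓕⁻ G x = 𝓕⁻ (fun x => (g x : ℂ)) x := fun x => by
        rw [SchwartzMap.fourierInv_coe]; rfl
      have := VectorFourier.integral_fourierIntegral_smul_eq_flip (L := -(innerₗ ℝ)) (μ := volume) (ν := volume)
        Real.continuous_fourierChar
        (by simp; fun_prop) G.integrable hint
      simp_rw [e4, Real.fourierInv_eq]
      simp [VectorFourier.fourierIntegral, mul_comm] at this
      have e5 : ∀ x, G x = (g x : ℂ) := fun x => rfl
      simp only [e5] at this
      simpa [mul_comm] using this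
  have h1 : eLpNorm (𝓕⁻ k) 2 volume = eLpNorm k 2 volume := by
    rw [← eLpNorm_congr_ae key, ← Lp.enorm_def, ← eLpNorm_congr_ae hmem.coeFn_toLp, ← Lp.enorm_def]
    rw [← ofReal_norm, ← ofReal_norm]
    congr 1
    exact (Lp.fourierTransformₗᵢ ℝ ℂ).symm.norm_map K
  simp only [eLpNorm_eq_lintegral_rpow_enorm_toReal two_ne_zero ENNReal.ofNat_ne_top] at h1
  simp only [ENNReal.toReal_ofNat] at h1
  exact (ENNReal.rpow_left_injective (by norm_num : (1/(2:ℝ)) ≠ 0)) h1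

lemma lint_norm {E : Type*} [NormedAddCommGroup E] [NormedSpace ℝ E] [MeasurableSpace E]
    [Nontrivial E] (μ : Measure E) [FiniteDimensional ℝ E] [BorelSpace E] [μ.IsAddHaarMeasure]
    (f : ℝ → ℝ≥0∞) (hf : Measurable f) :
    ∫⁻ x, f ‖x‖ ∂μ = (Module.finrank ℝ E * μ (Metric.ball 0 1)) *
      ∫⁻ y in Ioi (0:ℝ), ENNReal.ofReal (y ^ (Module.finrank ℝ E - 1)) * f y := by
  calc
    ∫⁻ x, f (‖x‖) ∂μ = ∫⁻ x : ({(0)}ᶜ : Set E), f (‖x.1‖) ∂(μ.comap (↑)) := by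
      rw [lintegral_subtype_comap (measurableSet_singleton _).compl fun x ↦ f (‖x‖),
        restrict_compl_singleton]
    _ = ∫⁻ x, f x.2 ∂μ.toSphere.prod (.volumeIoiPow (Module.finrank ℝ E - 1)) := by
      simpa using! μ.measurePreserving_homeomorphUnitSphereProd.lintegral_comp_emb
        (Homeomorph.measurableEmbedding _) (f ∘ Subtype.val ∘ Prod.snd)
    _ = μ.toSphere univ * ∫⁻ x : Ioi (0 : ℝ), f x ∂.volumeIoiPow (Module.finrank ℝ E - 1) := by
      rw [lintegral_prod _ (by fun_prop)]
      simp [mul_comm]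
    _ = _ := by
      simp only [Measure.volumeIoiPow]
      rw [lintegral_withDensity_eq_lintegral_mul _ (by fun_prop) (by fun_prop), μ.toSphere_apply_univ]
      congr 1
      exact lintegral_subtype_comap measurableSet_Ioi fun a ↦ ENNReal.ofReal (a ^ (Module.finrank ℝ E - 1)) * f a

lemma lint_abs (f : ℝ → ℝ≥0∞) (hf : Measurable f) :
    ∫⁻ x : ℝ, f |x| = 2 * ∫⁻ y in Ioi (0:ℝ), f y := by
  have := lint_norm (volume : Measure ℝ) f hf
  simp at this
  exact this

lemma lint_scale (c : ℝ) (hc : c ≠ 0) (f : ℝ → ℝ≥0∞) :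
    ∫⁻ x, f x = ENNReal.ofReal |c| * ∫⁻ x, f (c * x) := by
  have h := Real.map_volume_mul_left hc
  have h2 := (Homeomorph.mulLeft₀ c hc).measurableEmbedding.lintegral_map f (μ := volume)
  simp only [Homeomorph.coe_mulLeft₀] at h2
  rw [← h2, h, lintegral_smul_measure, smul_eq_mul, ← mul_assoc, ← ENNReal.ofReal_mul (abs_nonneg _),
    ← abs_mul, mul_inv_cancel₀ hc]
  simp

lemma J_fin (s : ℝ) (h0 : 0 < s) (h1 : s < 1) :
    ∫⁻ h : ℝ, ENNReal.ofReal (|h| ^ (-1 - 2 * s)) * ‖(1 : ℂ) - 𝐞 h‖ₑ ^ (2:ℝ) < ⊤ := by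
  have hb : ∀ h : ℝ, ‖(1 : ℂ) - 𝐞 h‖ ≤ 2 * π * |h| := by
    intro h
    rw [← norm_neg, neg_sub, Real.fourierChar_apply]
    have := Complex.norm_exp_I_mul_ofReal_sub_one (x := 2 * π * h)
    rw [mul_comm] at this
    rw [this, norm_mul, Real.norm_eq_abs, Real.norm_eq_abs, abs_two]
    have h3 := Real.abs_sin_le_abs (x := 2 * π * h / 2)
    rw [show 2 * π * h / 2 = π * h by ring, abs_mul, abs_of_pos pi_pos] at h3
    rw [show 2 * π * h / 2 = π * h by ring]
    linarith
  have hb2 : ∀ h : ℝ, ‖(1 : ℂ) - 𝐞 h‖ ≤ 2 := by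
    intro h
    refine (norm_sub_le _ _).trans ?_
    have := Circle.norm_coe (𝐞 h)
    rw [this, norm_one]; norm_num
  set F : ℝ → ℝ≥0∞ := fun h => ENNReal.ofReal (h ^ (-1 - 2 * s)) * ENNReal.ofReal (min 2 (2 * π * h)) ^ (2:ℝ)
  have hF : Measurable F := by fun_prop
  calc _ ≤ ∫⁻ h : ℝ, F |h| := by
        apply lintegral_mono; intro h
        simp only [F]
        gcongr
        rw [← ofReal_norm]
        exact ENNReal.ofReal_le_ofReal (le_min (hb2 h) (hb h))
    _ = 2 * ∫⁻ y in Ioi (0:ℝ), F y := lint_abs F hF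
    _ < ⊤ := by
        apply ENNReal.mul_lt_top (by simp)
        rw [← Ioc_union_Ioi_eq_Ioi zero_le_one]
        refine (lintegral_union_le _ _ _).trans_lt (ENNReal.add_lt_top.2 ⟨?_, ?_⟩)
        · have hi : IntegrableOn (fun x : ℝ => (2*π)^2 * x ^ (1 - 2 * s)) (Ioc 0 1) := by
            apply Integrable.const_mul
            rw [← IntegrableOn, integrableOn_Ioc_iff_integrableOn_Ioo, intervalIntegral.integrableOn_Ioo_rpow_iff (by norm_num)]
            linarith
          refine lt_of_le_of_lt ?_ hi.lintegral_lt_top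
          apply setLIntegral_mono (by fun_prop)
          intro x hx
          have hx0 := hx.1
          simp only [F]
          rw [ENNReal.ofReal_rpow_of_nonneg (by positivity) (by norm_num), ← ENNReal.ofReal_mul (by positivity)]
          apply ENNReal.ofReal_le_ofReal
          have : (min 2 (2 * π * x)) ^ (2:ℝ) ≤ (2 * π * x) ^ (2:ℝ) := by
            gcongr; exact min_le_right _ _
          calc _ ≤ x ^ (-1 - 2 * s) * (2 * π * x) ^ (2:ℝ) := by gcongr
            _ = _ := by
              rw [show (1 - 2 * s) = (-1 - 2*s) + 2 by ring, Real.rpow_add hx0, Real.rpow_two, Real.rpow_two]; ring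
        · have hi : IntegrableOn (fun x : ℝ => 4 * x ^ (-1 - 2 * s)) (Ioi 1) := by
            apply Integrable.const_mul
            exact integrableOn_Ioi_rpow_of_lt (by linarith) one_pos
          refine lt_of_le_of_lt ?_ hi.lintegral_lt_top
          apply setLIntegral_mono (by fun_prop)
          intro x hx
          have hx0 : 0 < x := lt_trans one_pos hx
          simp only [F]
          rw [ENNReal.ofReal_rpow_of_nonneg (by positivity) (by norm_num), ← ENNReal.ofReal_mul (by positivity)]
          apply ENNReal.ofReal_le_ofReal
          have : (min 2 (2 * π * x)) ^ (2:ℝ) ≤ (2) ^ (2:ℝ) := by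
            gcongr; exact min_le_left _ _
          calc _ ≤ x ^ (-1 - 2 * s) * 2 ^ (2:ℝ) := by gcongr
            _ = _ := by
              rw [Real.rpow_two]; ring

lemma J_scale (s ρ : ℝ) (hρ : ρ ≠ 0) :
    ∫⁻ h : ℝ, ENNReal.ofReal (|h| ^ (-1 - 2 * s)) * ‖(1 : ℂ) - 𝐞 (h * ρ)‖ₑ ^ (2:ℝ) =
    ENNReal.ofReal (|ρ| ^ (2 * s)) *
      ∫⁻ h : ℝ, ENNReal.ofReal (|h| ^ (-1 - 2 * s)) * ‖(1 : ℂ) - 𝐞 h‖ₑ ^ (2:ℝ) := by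
  have hp : 0 < |ρ| := abs_pos.2 hρ
  rw [lint_scale ρ⁻¹ (inv_ne_zero hρ), ← lintegral_const_mul' _ _ (by simp), ← lintegral_const_mul' _ _ (by simp)]
  congr 1; ext h
  rw [← mul_assoc, ← mul_assoc, ← ENNReal.ofReal_mul (by positivity), ← ENNReal.ofReal_mul (by positivity)]
  congr 2
  · rw [abs_mul, Real.mul_rpow (by positivity) (by positivity), ← mul_assoc]
    congr 1
    have e : |ρ| * |ρ| ^ (-1 - 2 * s) = |ρ| ^ (-(2 * s)) := by
      rw [show -(2 * s) = 1 + (-1 - 2 * s) by ring, Real.rpow_add hp, Real.rpow_one]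
    rw [abs_inv, Real.inv_rpow (by positivity), ← mul_inv, e, Real.rpow_neg (by positivity), inv_inv]
  · rw [show ρ⁻¹ * h * ρ = h by field_simp]

lemma gagl (s : ℝ) (h0 : 0 < s) (h1 : s < 1) : ∃ C : ℝ≥0∞, C < ⊤ ∧ ∀ k : ℝ → ℂ, Continuous k →
    HasCompactSupport k →
    ∫⁻ a : ℝ, ∫⁻ b : ℝ, ENNReal.ofReal (|a - b| ^ (-1 - 2 * s)) * ‖𝓕⁻ k a - 𝓕⁻ k b‖ₑ ^ (2:ℝ)
      ≤ C * ∫⁻ ρ, ENNReal.ofReal (|ρ| ^ (2 * s)) * ‖k ρ‖ₑ ^ (2:ℝ) := by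
  refine ⟨_, J_fin s h0 h1, fun k hk hc => ?_⟩
  have hint : Integrable k := hk.integrable_of_hasCompactSupport hc
  have hcont : Continuous (𝓕⁻ k) := by
    have := VectorFourier.fourierIntegral_continuous (L := -(innerₗ ℝ)) Real.continuous_fourierChar
      (by simp; fun_prop) hint
    refine this.congr fun x => ?_
    rw [Real.fourierInv_eq]
    simp [VectorFourier.fourierIntegral]
  have hce : Continuous (fun h : ℝ => ((𝐞 h : Circle) : ℂ)) := continuous_subtype_val.comp Real.continuous_fourierChar
  have step : ∀ h : ℝ, ∫⁻ a : ℝ, ‖𝓕⁻ k a - 𝓕⁻ k (a + h)‖ₑ ^ (2:ℝ) =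
      ∫⁻ ρ : ℝ, ‖(1 : ℂ) - 𝐞 (h * ρ)‖ₑ ^ (2:ℝ) * ‖k ρ‖ₑ ^ (2:ℝ) := by
    intro h
    have := plancherel_aux (fun ρ => ((1 : ℂ) - 𝐞 (h * ρ)) * k ρ) (by fun_prop) hc.mul_left
    simp only [enorm_mul, ENNReal.mul_rpow_of_nonneg _ _ (zero_le_two : (0:ℝ) ≤ 2)] at this
    rw [← this]
    congr 1; ext a
    congr 2
    have i1 : ∀ w : ℝ, Integrable (fun v : ℝ => 𝐞 (v * w) • k v) := by
      intro w
      have := (Real.fourierIntegral_convergent_iff (f := k) (μ := volume) (-w)).2 hint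
      simpa [mul_comm] using this
    simp only [Real.fourierInv_eq]
    simp only [RCLike.inner_apply, conj_trivial]
    rw [← integral_sub]
    · congr 1; ext v
      simp only [Circle.smul_def, smul_eq_mul]
      rw [add_mul, AddChar.map_add_eq_mul]
      push_cast
      rw [mul_comm h v]
      ring_nf
    · simpa [mul_comm] using i1 a
    · simpa [mul_comm] using i1 (a+h)
  calc _ = ∫⁻ a : ℝ, ∫⁻ h : ℝ, ENNReal.ofReal (|h| ^ (-1 - 2 * s)) * ‖𝓕⁻ k a - 𝓕⁻ k (a + h)‖ₑ ^ (2:ℝ) := by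
        congr 1; ext a
        rw [← lintegral_add_left_eq_self _ a]
        congr 1; ext h
        rw [show a - (a + h) = - h by ring, abs_neg]
    _ = ∫⁻ h : ℝ, ∫⁻ a : ℝ, ENNReal.ofReal (|h| ^ (-1 - 2 * s)) * ‖𝓕⁻ k a - 𝓕⁻ k (a + h)‖ₑ ^ (2:ℝ) := by
        rw [lintegral_lintegral_swap]
        apply Measurable.aemeasurable
        have : Continuous fun z : ℝ × ℝ => 𝓕⁻ k z.1 - 𝓕⁻ k (z.1 + z.2) := by fun_prop
        have := this.measurable
        unfold Function.uncurry
        fun_prop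
    _ = ∫⁻ h : ℝ, ∫⁻ ρ : ℝ, ENNReal.ofReal (|h| ^ (-1 - 2 * s)) * (‖(1 : ℂ) - 𝐞 (h * ρ)‖ₑ ^ (2:ℝ) * ‖k ρ‖ₑ ^ (2:ℝ)) := by
        congr 1; ext h
        rw [lintegral_const_mul' _ _ (by simp), lintegral_const_mul' _ _ (by simp), step]
    _ = ∫⁻ ρ : ℝ, ∫⁻ h : ℝ, ENNReal.ofReal (|h| ^ (-1 - 2 * s)) * (‖(1 : ℂ) - 𝐞 (h * ρ)‖ₑ ^ (2:ℝ) * ‖k ρ‖ₑ ^ (2:ℝ)) := by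
        rw [lintegral_lintegral_swap]
        apply Measurable.aemeasurable
        unfold Function.uncurry
        have : Continuous fun z : ℝ × ℝ => (1 : ℂ) - 𝐞 (z.1 * z.2) := by fun_prop
        have := this.measurable
        have := hk.measurable
        fun_prop
    _ ≤ ∫⁻ ρ : ℝ, (∫⁻ h : ℝ, ENNReal.ofReal (|h| ^ (-1 - 2 * s)) * ‖(1 : ℂ) - 𝐞 h‖ₑ ^ (2:ℝ)) * (ENNReal.ofReal (|ρ| ^ (2 * s)) * ‖k ρ‖ₑ ^ (2:ℝ)) := by
        apply lintegral_mono; intro ρ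
        simp only
        rw [← mul_assoc, mul_comm (∫⁻ h : ℝ, _) (ENNReal.ofReal (|ρ| ^ (2 * s)))]
        simp_rw [← mul_assoc]
        rw [lintegral_mul_const' _ _ (ENNReal.rpow_ne_top_of_nonneg (by norm_num) (by simp))]
        gcongr
        by_cases hρ : ρ = 0
        · simp [hρ]
        · rw [J_scale s ρ hρ]
    _ = _ := by
        rw [lintegral_const_mul' _ _ (J_fin s h0 h1).ne]

def Qf (N : ℝ → ℝ → ℝ≥0∞) (ε t r : ℝ) : ℝ≥0∞ :=
  ∫⁻ a in Ioc (t + r) (t + r + ε * r), ∫⁻ b in {b | |a - b| ≤ 4 * ε * r}, N a b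

def Gf (N : ℝ → ℝ → ℝ≥0∞) (s ε t a : ℝ) : ℝ≥0∞ :=
  ENNReal.ofReal ((a - t) ^ (-2 - 2 * s)) * ∫⁻ b in {b | |a - b| ≤ 4 * ε * (a - t)}, N a b

def Zf (N : ℝ → ℝ → ℝ≥0∞) (s ε t : ℝ) : ℝ≥0∞ := ∫⁻ a in Ioi t, Gf N s ε t a

lemma meas_Gf (N : ℝ → ℝ → ℝ≥0∞) (hN : Measurable (Function.uncurry N)) (s ε : ℝ) :
    Measurable (fun z : ℝ × ℝ => Gf N s ε z.1 z.2) := by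
  unfold Gf
  apply Measurable.mul (by fun_prop)
  have : ∀ z : ℝ × ℝ, ∫⁻ b in {b | |z.2 - b| ≤ 4 * ε * (z.2 - z.1)}, N z.2 b =
      ∫⁻ b, {w : (ℝ × ℝ) × ℝ | |w.1.2 - w.2| ≤ 4 * ε * (w.1.2 - w.1.1)}.indicator (fun w => N w.1.2 w.2) (z, b) := by
    intro z
    rw [← lintegral_indicator]
    · rfl
    · exact measurableSet_le (by fun_prop) (by fun_prop)
  simp_rw [this]
  apply Measurable.lintegral_prod_right'
  apply Measurable.indicator
  · exact hN.comp (f := fun w : (ℝ × ℝ) × ℝ => (w.1.2, w.2)) (by fun_prop)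
  · exact measurableSet_le (by fun_prop) (by fun_prop)

lemma meas_Qf (N : ℝ → ℝ → ℝ≥0∞) (hN : Measurable (Function.uncurry N)) (ε : ℝ) :
    Measurable (fun z : ℝ × ℝ => Qf N ε z.1 z.2) := by
  unfold Qf
  have : ∀ z : ℝ × ℝ, ∀ a, ∫⁻ b in {b | |a - b| ≤ 4 * ε * z.2}, N a b =
      ∫⁻ b, {w : ((ℝ × ℝ) × ℝ) × ℝ | |w.1.2 - w.2| ≤ 4 * ε * (w.1.1.2)}.indicator (fun w => N w.1.2 w.2) ((z, a), b) := by
    intro z a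
    rw [← lintegral_indicator]
    · rfl
    · exact measurableSet_le (by fun_prop) (by fun_prop)
  simp_rw [this]
  have : ∀ z : ℝ × ℝ, ∀ f : (ℝ × ℝ) × ℝ → ℝ≥0∞, ∫⁻ a in Ioc (z.1 + z.2) (z.1 + z.2 + ε * z.2), f (z, a) =
    ∫⁻ a, ({w : (ℝ × ℝ) × ℝ | w.1.1 + w.1.2 < w.2} ∩ {w : (ℝ × ℝ) × ℝ | w.2 ≤ w.1.1 + w.1.2 + ε * w.1.2}).indicator f (z, a) := by
    intro z f
    rw [← lintegral_indicator measurableSet_Ioc]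
    rfl
  have e2 := fun z : ℝ × ℝ => this z (fun y => ∫⁻ b, {w : ((ℝ × ℝ) × ℝ) × ℝ | |w.1.2 - w.2| ≤ 4 * ε * (w.1.1.2)}.indicator (fun w => N w.1.2 w.2) (y, b))
  rw [funext e2]
  apply Measurable.lintegral_prod_right'
  apply Measurable.indicator
  · apply Measurable.lintegral_prod_right'
    apply Measurable.indicator
    · exact hN.comp (f := fun w : ((ℝ × ℝ) × ℝ) × ℝ => (w.1.2, w.2)) (by fun_prop)
    · exact measurableSet_le (by fun_prop) (by fun_prop)
  · exact (measurableSet_lt (by fun_prop) (by fun_prop)).inter (measurableSet_le (by fun_prop) (by fun_prop))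

lemma meas_Zf (N : ℝ → ℝ → ℝ≥0∞) (hN : Measurable (Function.uncurry N)) (s ε : ℝ) :
    Measurable (fun t : ℝ => Zf N s ε t) := by
  unfold Zf
  have : ∀ t : ℝ, ∫⁻ a in Ioi t, Gf N s ε t a =
    ∫⁻ a, ({w : ℝ × ℝ | w.1 < w.2}).indicator (fun w => Gf N s ε w.1 w.2) (t, a) := by
    intro z
    rw [← lintegral_indicator measurableSet_Ioi]
    rfl
  simp_rw [this]
  apply Measurable.lintegral_prod_right'
  exact (meas_Gf N hN s ε).indicator (measurableSet_lt (by fun_prop) (by fun_prop))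

lemma Qf_le (N : ℝ → ℝ → ℝ≥0∞) (s ε t r : ℝ) (h0 : 0 < s) (h1 : s < 1)
    (he : 0 < ε) (he1 : ε ≤ 1) (hr : 0 < r) :
    ENNReal.ofReal (r ^ (-2 - 2 * s)) * Qf N ε t r ≤
      16 * ∫⁻ a in Ioc (t + r) (t + r + ε * r), Gf N s ε t a := by
  unfold Qf
  rw [← lintegral_const_mul' _ _ (by simp), ← lintegral_const_mul' _ _ (by simp)]
  apply setLIntegral_mono' measurableSet_Ioc
  intro a ha
  have ha1 : r < a - t := by linarith [ha.1]
  have ha2 : a - t ≤ 2 * r := by nlinarith [ha.2]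
  unfold Gf
  rw [← mul_assoc]
  gcongr ?_ * ?_
  · rw [show (16 : ℝ≥0∞) = ENNReal.ofReal 16 by simp, ← ENNReal.ofReal_mul (by norm_num)]
    apply ENNReal.ofReal_le_ofReal
    have e : r ^ (-2 - 2 * s) = 2 ^ (2 + 2 * s) * (2 * r) ^ (-2 - 2 * s) := by
      rw [Real.mul_rpow (by norm_num) hr.le, ← mul_assoc, ← Real.rpow_add (by norm_num)]
      norm_num
    rw [e]
    gcongr ?_ * ?_
    · calc (2:ℝ) ^ (2 + 2 * s) ≤ 2 ^ (4 : ℝ) := by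
            apply Real.rpow_le_rpow_of_exponent_le <;> linarith
        _ = 16 := by norm_num
    · apply Real.rpow_le_rpow_of_nonpos (by linarith) ha2 (by linarith)
  · apply lintegral_mono_set
    intro b hb
    simp only [mem_setOf_eq] at hb ⊢
    refine hb.trans ?_
    gcongr

lemma P1 (N : ℝ → ℝ → ℝ≥0∞) (hN : Measurable (Function.uncurry N)) (s q ε t : ℝ) (h0 : 0 < s) (h1 : s < 1)
    (hq : 2 ≤ q) (he : 0 < ε) (he1 : ε ≤ 1) :
    ∫⁻ r in Ioi (0:ℝ), (ENNReal.ofReal (r ^ (-2 - 2 * s)) * Qf N ε t r) ^ (q / 2) * ENNReal.ofReal r⁻¹ ≤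
      ENNReal.ofReal ε * (16 * Zf N s ε t) ^ (q / 2) := by
  have hG := meas_Gf N hN s ε
  have hGt : Measurable (Gf N s ε t) := hG.comp (f := fun a => (t, a)) (by fun_prop)
  set U : ℝ → ℝ → ℝ≥0∞ := fun r a => ({w : ℝ × ℝ | t + w.1 < w.2} ∩ {w : ℝ × ℝ | w.2 ≤ t + w.1 + ε * w.1} ∩ {w : ℝ × ℝ | 0 < w.1}).indicator
      (fun w => Gf N s ε t w.2 * ENNReal.ofReal w.1⁻¹) (r, a) with hU
  have hUm : Measurable (Function.uncurry U) := by
    have : Function.uncurry U = ({w : ℝ × ℝ | t + w.1 < w.2} ∩ {w : ℝ × ℝ | w.2 ≤ t + w.1 + ε * w.1} ∩ {w : ℝ × ℝ | 0 < w.1}).indicator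
      (fun w => Gf N s ε t w.2 * ENNReal.ofReal w.1⁻¹) := by ext w; rfl
    rw [this]
    apply Measurable.indicator
    · fun_prop
    · exact ((measurableSet_lt (by fun_prop) (by fun_prop)).inter (measurableSet_le (by fun_prop) (by fun_prop))).inter (measurableSet_lt (by fun_prop) (by fun_prop))
  have hUeq : ∀ r : ℝ, 0 < r → ∫⁻ a, U r a = (∫⁻ a in Ioc (t + r) (t + r + ε * r), Gf N s ε t a) * ENNReal.ofReal r⁻¹ := by
    intro r hr
    rw [← lintegral_mul_const' _ _ (by simp), ← lintegral_indicator measurableSet_Ioc]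
    congr 1; ext a
    simp [hU, indicator, hr]
  have step : ∫⁻ a, ∫⁻ r, U r a ≤ Zf N s ε t * ENNReal.ofReal ε := by
    unfold Zf
    rw [← lintegral_mul_const' _ _ (by simp), ← lintegral_indicator measurableSet_Ioi]
    apply lintegral_mono
    intro a
    by_cases hat : t < a
    · simp only [indicator, mem_Ioi, hat, if_true]
      have hpos : 0 < a - t := by linarith
      calc ∫⁻ r, U r a ≤ ∫⁻ r in Ico ((a - t) / (1 + ε)) (a - t), Gf N s ε t a * ENNReal.ofReal ((1 + ε) / (a - t)) := by
            rw [← lintegral_indicator measurableSet_Ico]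
            apply lintegral_mono
            intro r
            simp only [hU, indicator]
            split_ifs with h1 h2 h2
            · gcongr
              simp at h1 h2
              rw [← inv_div]
              gcongr
              exact h2.1
            · exfalso
              apply h2
              simp at h1 ⊢
              constructor
              · rw [div_le_iff₀ (by positivity)]; linarith
              · linarith
            · positivity
            · positivity
        _ = Gf N s ε t a * ENNReal.ofReal ε := by
            rw [setLIntegral_const, Real.volume_Ico, mul_assoc, ← ENNReal.ofReal_mul (by positivity)]
            congr 2
            field_simp
            ring
    · have : ∀ r, U r a = 0 := by
        intro r
        simp only [hU, indicator]
        split_ifs with h1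
        · exfalso; simp at h1; linarith
        · rfl
      simp [this]
  calc _ ≤ ∫⁻ r in Ioi (0:ℝ), (16 * Zf N s ε t) ^ (q / 2 - 1) * (16 * ∫⁻ a, U r a) := by
        apply setLIntegral_mono' measurableSet_Ioi
        intro r hr
        have hr : 0 < r := hr
        rw [hUeq r hr, ← mul_assoc, ← mul_assoc, mul_assoc _ 16]
        gcongr ?_ * _
        have hQ := Qf_le N s ε t r h0 h1 he he1 hr
        have hQ2 : ENNReal.ofReal (r ^ (-2 - 2 * s)) * Qf N ε t r ≤ 16 * Zf N s ε t := by
          refine hQ.trans ?_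
          unfold Zf
          gcongr
          intro a ha
          have := ha.1
          simp; linarith
        generalize ENNReal.ofReal (r ^ (-2 - 2 * s)) * Qf N ε t r = w at *
        calc w ^ (q/2) = w ^ (q/2-1) * w ^ (1:ℝ) := by
              rw [← ENNReal.rpow_add_of_nonneg _ _ (by linarith) (by norm_num)]; congr 1; ring
          _ ≤ _ := by
              rw [ENNReal.rpow_one]
              gcongr
              linarith
    _ ≤ ∫⁻ r, (16 * Zf N s ε t) ^ (q / 2 - 1) * (16 * ∫⁻ a, U r a) := setLIntegral_le_lintegral _ _
    _ = (16 * Zf N s ε t) ^ (q / 2 - 1) * (16 * ∫⁻ r, ∫⁻ a, U r a) := by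
        have : Measurable fun r => ∫⁻ a, U r a := hUm.lintegral_prod_right'
        rw [lintegral_const_mul _ (by fun_prop), lintegral_const_mul _ this]
    _ ≤ (16 * Zf N s ε t) ^ (q / 2 - 1) * (16 * (Zf N s ε t * ENNReal.ofReal ε)) := by
        rw [lintegral_lintegral_swap hUm.aemeasurable]
        gcongr
    _ = (16 * Zf N s ε t) ^ (q / 2 - 1) * (16 * Zf N s ε t) ^ (1:ℝ) * ENNReal.ofReal ε := by
        rw [ENNReal.rpow_one]; ring
    _ = _ := by
        rw [← ENNReal.rpow_add_of_nonneg _ _ (by linarith) (by norm_num), mul_comm]; congr 2; ring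

lemma P2 (N : ℝ → ℝ → ℝ≥0∞) (hN : Measurable (Function.uncurry N)) (hd : ∀ a, N a a = 0)
    (s ε : ℝ) (h0 : 0 < s) (he : 0 < ε)  :
    ∫⁻ t, Zf N s ε t ≤ ENNReal.ofReal ((4 * ε) ^ (1 + 2 * s)) *
      ∫⁻ a, ∫⁻ b, ENNReal.ofReal (|a - b| ^ (-1 - 2 * s)) * N a b := by
  set V : ℝ → ℝ → ℝ → ℝ≥0∞ := fun t a b => ({w : ℝ × ℝ × ℝ | w.1 < w.2.1} ∩ {w : ℝ × ℝ × ℝ | |w.2.1 - w.2.2| ≤ 4 * ε * (w.2.1 - w.1)}).indicator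
      (fun w => ENNReal.ofReal ((w.2.1 - w.1) ^ (-2 - 2 * s)) * N w.2.1 w.2.2) (t, a, b) with hV
  have hVm : Measurable (fun w : ℝ × ℝ × ℝ => V w.1 w.2.1 w.2.2) := by
    apply Measurable.indicator
    · have := hN.comp (f := fun w : ℝ × ℝ × ℝ => (w.2.1, w.2.2)) (by fun_prop)
      exact Measurable.mul (by fun_prop) this
    · exact (measurableSet_lt (by fun_prop) (by fun_prop)).inter (measurableSet_le (by fun_prop) (by fun_prop))
  have e1 : ∀ t, Zf N s ε t = ∫⁻ a, ∫⁻ b, V t a b := by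
    intro t
    unfold Zf Gf
    rw [← lintegral_indicator measurableSet_Ioi]
    congr 1; ext a
    simp only [indicator, mem_Ioi]
    split_ifs with h
    · rw [← lintegral_const_mul' _ _ (by simp), ← lintegral_indicator (measurableSet_le (by fun_prop) (by fun_prop))]
      congr 1; ext b
      simp [hV, h, indicator]
    · simp [hV, h, indicator]
  simp_rw [e1]
  have m1 : Measurable (Function.uncurry fun t a => ∫⁻ b, V t a b) := by
    have : Measurable (fun w : (ℝ × ℝ) × ℝ => V w.1.1 w.1.2 w.2) :=
      hVm.comp (f := fun w : (ℝ × ℝ) × ℝ => (w.1.1, w.1.2, w.2)) (by fun_prop)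
    exact this.lintegral_prod_right'
  rw [lintegral_lintegral_swap m1.aemeasurable, ← lintegral_const_mul' _ _ (by simp)]
  apply lintegral_mono
  intro a
  simp only
  have m2 : Measurable (Function.uncurry fun t b => V t a b) :=
    hVm.comp (f := fun w : ℝ × ℝ => (w.1, a, w.2)) (by fun_prop)
  rw [lintegral_lintegral_swap m2.aemeasurable, ← lintegral_const_mul' _ _ (by simp)]
  apply lintegral_mono
  intro b
  simp only
  by_cases hab : a = b
  · subst hab; simp [hV, hd, indicator]
  have hpos : 0 < |a - b| := abs_pos.2 (sub_ne_zero.2 hab)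
  set d := |a - b| / (4 * ε) with hd'
  have hdp : 0 < d := by positivity
  calc ∫⁻ t, V t a b ≤ ∫⁻ t, (Ici d).indicator (fun z => ENNReal.ofReal (z ^ (-2 - 2 * s))) (a - t) * N a b := by
        apply lintegral_mono
        intro t
        simp only [hV, indicator]
        split_ifs with h1 h2 h2
        · exact le_rfl
        · exfalso; apply h2; simp at h1 ⊢
          rw [hd', div_le_iff₀ (by positivity)]; linarith [h1.2]
        · positivity
        · positivity
    _ = (∫⁻ t, (Ici d).indicator (fun z => ENNReal.ofReal (z ^ (-2 - 2 * s))) t) * N a b := by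
        rw [lintegral_mul_const]
        · rw [lintegral_sub_left_eq_self (fun z => (Ici d).indicator (fun z => ENNReal.ofReal (z ^ (-2 - 2 * s))) z) a]
        · exact (Measurable.indicator (by fun_prop) measurableSet_Ici).comp (f := fun t => a - t) (by fun_prop)
    _ ≤ ENNReal.ofReal (d ^ (-1 - 2 * s)) * N a b := by
        gcongr
        rw [lintegral_indicator measurableSet_Ici, setLIntegral_congr Ioi_ae_eq_Ici.symm, 
          ← ofReal_integral_eq_lintegral_ofReal (integrableOn_Ioi_rpow_of_lt (by linarith) hdp),
          integral_Ioi_rpow_of_lt (by linarith) hdp]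
        · apply ENNReal.ofReal_le_ofReal
          rw [show -2 - 2 * s + 1 = -1 - 2 * s by ring, neg_div, ← div_neg]
          apply div_le_self (by positivity) (by linarith)
        · filter_upwards [ae_restrict_mem measurableSet_Ioi] with x hx
          have : 0 < x := hdp.trans hx
          simp only [Pi.zero_apply]; positivity
    _ = _ := by
        rw [← mul_assoc, ← ENNReal.ofReal_mul (by positivity)]
        congr 2
        rw [hd', Real.div_rpow (by positivity) (by positivity), show -1 - 2 * s = -(1 + 2 * s) by ring, Real.rpow_neg (by positivity : 0 ≤ 4 * ε)]
        field_simp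

lemma geom_fin (γ : ℝ) (hγ : 0 < γ) : ∑' k : ℕ, ENNReal.ofReal ((2:ℝ) ^ (-γ * k)) < ⊤ := by
  have : ∀ k : ℕ, (2:ℝ) ^ (-γ * k) = ((2:ℝ) ^ (-γ)) ^ k := fun k => by
    rw [Real.rpow_mul (by norm_num), Real.rpow_natCast]
  simp_rw [this]
  have h1 : (2:ℝ) ^ (-γ) < 1 := Real.rpow_lt_one_of_one_lt_of_neg (by norm_num) (by linarith)
  have := (summable_geometric_of_lt_one (by positivity : 0 ≤ (2:ℝ) ^ (-γ)) h1)
  exact this.tsum_ofReal_lt_top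

lemma sum_pow_le (x : ℕ → ℝ≥0∞) (γ q : ℝ) (hq : 0 < q) :
    (∑' k, x k) ^ q ≤ (∑' k : ℕ, ENNReal.ofReal ((2:ℝ) ^ (-γ * k))) ^ q *
      ∑' k : ℕ, (ENNReal.ofReal ((2:ℝ) ^ (γ * k)) * x k) ^ q := by
  set M := ∑' k : ℕ, (ENNReal.ofReal ((2:ℝ) ^ (γ * k)) * x k) ^ q with hM
  have h1 : ∀ k : ℕ, x k ≤ ENNReal.ofReal ((2:ℝ) ^ (-γ * k)) * M ^ (1 / q) := by
    intro k
    have h2 : (ENNReal.ofReal ((2:ℝ) ^ (γ * k)) * x k) ≤ M ^ (1/q) := by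
      rw [one_div, ENNReal.le_rpow_inv_iff hq]
      exact ENNReal.le_tsum (f := fun k : ℕ => (ENNReal.ofReal ((2:ℝ) ^ (γ * k)) * x k) ^ q) k
    calc x k = ENNReal.ofReal ((2:ℝ) ^ (-γ * k)) * (ENNReal.ofReal ((2:ℝ) ^ (γ * k)) * x k) := by
          rw [← mul_assoc, ← ENNReal.ofReal_mul (by positivity), ← Real.rpow_add (by norm_num)]
          simp
      _ ≤ _ := by gcongr
  calc _ ≤ ((∑' k : ℕ, ENNReal.ofReal ((2:ℝ) ^ (-γ * k))) * M ^ (1/q)) ^ q := by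
        gcongr
        rw [← ENNReal.tsum_mul_right]
        exact ENNReal.tsum_le_tsum h1
    _ = _ := by
        rw [ENNReal.mul_rpow_of_nonneg _ _ hq.le, ← ENNReal.rpow_mul]
        simp [hq.ne']

def Sf (N : ℝ → ℝ → ℝ≥0∞) (s t r : ℝ) : ℝ≥0∞ :=
  ∑' k : ℕ, ENNReal.ofReal ((2:ℝ) ^ (k:ℝ)) *
    (ENNReal.ofReal (r ^ (-2 - 2 * s)) * Qf N ((2:ℝ) ^ (-(k:ℝ))) t r) ^ (1 / 2 : ℝ)

lemma meas_Sf (N : ℝ → ℝ → ℝ≥0∞) (hN : Measurable (Function.uncurry N)) (s : ℝ) :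
    Measurable (fun z : ℝ × ℝ => Sf N s z.1 z.2) := by
  unfold Sf
  apply Measurable.ennreal_tsum
  intro k
  have := meas_Qf N hN ((2:ℝ) ^ (-(k:ℝ)))
  fun_prop

lemma P3 (q s : ℝ) (hq : 4 < q) (hs : s = 1 - 3 / q) : ∃ C : ℝ≥0∞, C < ⊤ ∧
    ∀ N : ℝ → ℝ → ℝ≥0∞, Measurable (Function.uncurry N) → (∀ a, N a a = 0) →
    ∫⁻ t, (∫⁻ r in Ioi (0:ℝ), (Sf N s t r) ^ q * ENNReal.ofReal r⁻¹) ^ (2 / q) ≤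
      C * ∫⁻ a, ∫⁻ b, ENNReal.ofReal (|a - b| ^ (-1 - 2 * s)) * N a b := by
  have hq0 : 0 < q := by linarith
  have h3 : 3 / q < 3 / 4 := by gcongr
  have h3' : 0 < 3 / q := by positivity
  have h4 : 4 / q < 1 := by rw [div_lt_one hq0]; exact hq
  have hs0 : 0 < s := by linarith
  have hs1 : s < 1 := by linarith
  set γ := (1 - 4 / q) / 4 with hγ
  have hγ0 : 0 < γ := by linarith
  set K := ∑' k : ℕ, ENNReal.ofReal ((2:ℝ) ^ (-γ * k)) with hK
  have hKt : K < ⊤ := geom_fin γ hγ0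
  have hη : 0 < 2 * γ * (1 - 1 / q) := by
    have : 1 / q < 1 := by rw [div_lt_one hq0]; linarith
    have : 0 < 1 - 1 / q := by linarith
    positivity
  refine ⟨(K ^ q) ^ (2 / q) * K ^ (2 / q) * (ENNReal.ofReal (16 * 4 ^ (1 + 2 * s)) *
    ∑' k : ℕ, ENNReal.ofReal ((2:ℝ) ^ (-(2 * γ * (1 - 1 / q)) * k))), ?_, ?_⟩
  · apply ENNReal.mul_lt_top
    · apply ENNReal.mul_lt_top <;> apply ENNReal.rpow_lt_top_of_nonneg (by positivity)
      · exact (ENNReal.rpow_lt_top_of_nonneg hq0.le hKt.ne).ne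
      · exact hKt.ne
    · exact ENNReal.mul_lt_top ENNReal.ofReal_lt_top (geom_fin _ hη)
  intro N hN hd
  have hQm : ∀ t ε, Measurable (fun r => Qf N ε t r) := fun t ε =>
    (meas_Qf N hN ε).comp (f := fun r => (t, r)) (by fun_prop)
  have inner : ∀ t, ∫⁻ r in Ioi (0:ℝ), (Sf N s t r) ^ q * ENNReal.ofReal r⁻¹ ≤
      K ^ q * ∑' k : ℕ, (ENNReal.ofReal ((2:ℝ) ^ (γ * k)) * ENNReal.ofReal ((2:ℝ) ^ (k:ℝ))) ^ q *
        (ENNReal.ofReal ((2:ℝ) ^ (-(k:ℝ))) * (16 * Zf N s ((2:ℝ) ^ (-(k:ℝ))) t) ^ (q / 2)) := by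
    intro t
    calc _ ≤ ∫⁻ r in Ioi (0:ℝ), K ^ q * ∑' k : ℕ, (ENNReal.ofReal ((2:ℝ) ^ (γ * k)) * ENNReal.ofReal ((2:ℝ) ^ (k:ℝ))) ^ q *
            ((ENNReal.ofReal (r ^ (-2 - 2 * s)) * Qf N ((2:ℝ) ^ (-(k:ℝ))) t r) ^ (q / 2) * ENNReal.ofReal r⁻¹) := by
          apply lintegral_mono
          intro r
          unfold Sf
          simp only
          grw [sum_pow_le _ γ q hq0]
          rw [mul_assoc, ← ENNReal.tsum_mul_right]
          refine mul_le_mul' le_rfl (ENNReal.tsum_le_tsum fun k => ?_)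
          rw [← mul_assoc, ENNReal.mul_rpow_of_nonneg _ _ hq0.le, ← ENNReal.rpow_mul, mul_assoc, show 1 / 2 * q = q / 2 by ring]
      _ = K ^ q * ∑' k : ℕ, (ENNReal.ofReal ((2:ℝ) ^ (γ * k)) * ENNReal.ofReal ((2:ℝ) ^ (k:ℝ))) ^ q *
            ∫⁻ r in Ioi (0:ℝ), ((ENNReal.ofReal (r ^ (-2 - 2 * s)) * Qf N ((2:ℝ) ^ (-(k:ℝ))) t r) ^ (q / 2) * ENNReal.ofReal r⁻¹) := by
          rw [lintegral_const_mul, lintegral_tsum]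
          · congr 2; ext k
            rw [lintegral_const_mul]
            have := hQm t ((2:ℝ) ^ (-(k:ℝ)))
            fun_prop
          · intro k
            have := hQm t ((2:ℝ) ^ (-(k:ℝ)))
            fun_prop
          · apply Measurable.ennreal_tsum
            intro k
            have := hQm t ((2:ℝ) ^ (-(k:ℝ)))
            fun_prop
      _ ≤ _ := by
          gcongr with k
          apply P1 N hN s q _ t hs0 hs1 (by linarith) (by positivity)
          apply Real.rpow_le_one_of_one_le_of_nonpos (by norm_num) (by simp)
  calc _ ≤ ∫⁻ t, (K ^ q) ^ (2 / q) * (K ^ (2 / q) * ∑' k : ℕ, (ENNReal.ofReal ((2:ℝ) ^ (γ * k)) ^ (2 / q) * 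
        (ENNReal.ofReal ((2:ℝ) ^ (γ * k)) * ENNReal.ofReal ((2:ℝ) ^ (k:ℝ))) ^ (2:ℝ) *
        ENNReal.ofReal ((2:ℝ) ^ (-(k:ℝ))) ^ (2 / q) * 16) * Zf N s ((2:ℝ) ^ (-(k:ℝ))) t) := by
        apply lintegral_mono
        intro t
        simp only
        grw [inner t]
        rw [ENNReal.mul_rpow_of_nonneg _ _ (by positivity)]
        grw [sum_pow_le _ γ (2 / q) (by positivity)]
        gcongr with k
        simp only [ENNReal.mul_rpow_of_nonneg _ _ (by positivity : 0 ≤ 2 / q), ENNReal.mul_rpow_of_nonneg _ _ hq0.le, ENNReal.mul_rpow_of_nonneg _ _ (by positivity : 0 ≤ q / 2), ← ENNReal.rpow_mul, ENNReal.mul_rpow_of_nonneg _ _ (by positivity : (0:ℝ) ≤ 2)]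
        rw [show q * (2 / q) = 2 by field_simp, show q / 2 * (2 / q) = 1 by field_simp, ENNReal.rpow_one, ENNReal.rpow_one]
        ring_nf
        exact le_rfl
    _ = (K ^ q) ^ (2 / q) * (K ^ (2 / q) * ∑' k : ℕ, (ENNReal.ofReal ((2:ℝ) ^ (γ * k)) ^ (2 / q) * 
        (ENNReal.ofReal ((2:ℝ) ^ (γ * k)) * ENNReal.ofReal ((2:ℝ) ^ (k:ℝ))) ^ (2:ℝ) *
        ENNReal.ofReal ((2:ℝ) ^ (-(k:ℝ))) ^ (2 / q) * 16) * ∫⁻ t, Zf N s ((2:ℝ) ^ (-(k:ℝ))) t) := by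
        have hm := fun ε => meas_Zf N hN s ε
        have hm2 : ∀ k : ℕ, Measurable fun t => (ENNReal.ofReal ((2:ℝ) ^ (γ * k)) ^ (2 / q) * 
          (ENNReal.ofReal ((2:ℝ) ^ (γ * k)) * ENNReal.ofReal ((2:ℝ) ^ (k:ℝ))) ^ (2:ℝ) *
          ENNReal.ofReal ((2:ℝ) ^ (-(k:ℝ))) ^ (2 / q) * 16) * Zf N s ((2:ℝ) ^ (-(k:ℝ))) t := by
          intro k; have := hm ((2:ℝ) ^ (-(k:ℝ))); fun_prop
        rw [lintegral_const_mul, lintegral_const_mul, lintegral_tsum]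
        · congr 3; ext k
          rw [lintegral_const_mul _ (hm _)]
        · intro k; exact (hm2 k).aemeasurable
        · exact Measurable.ennreal_tsum hm2
        · exact (Measurable.ennreal_tsum hm2).const_mul _
    _ ≤ (K ^ q) ^ (2 / q) * (K ^ (2 / q) * ∑' k : ℕ, (ENNReal.ofReal (16 * 4 ^ (1 + 2 * s)) * ENNReal.ofReal ((2:ℝ) ^ (-(2 * γ * (1 - 1 / q)) * k))) *
         ∫⁻ a, ∫⁻ b, ENNReal.ofReal (|a - b| ^ (-1 - 2 * s)) * N a b) := by
        refine mul_le_mul' le_rfl (mul_le_mul' le_rfl (ENNReal.tsum_le_tsum fun k => ?_))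
        grw [P2 N hN hd s ((2:ℝ) ^ (-(k:ℝ))) hs0 (by positivity)]
        rw [← mul_assoc]
        gcongr ?_ * _
        apply le_of_eq
        rw [show (16 : ℝ≥0∞) = ENNReal.ofReal 16 by simp]
        rw [← ENNReal.ofReal_mul (by positivity), ENNReal.ofReal_rpow_of_nonneg (by positivity) (by positivity), ENNReal.ofReal_rpow_of_nonneg (by positivity) (by positivity), ENNReal.ofReal_rpow_of_nonneg (by positivity) (by positivity), ← ENNReal.ofReal_mul (by positivity), ← ENNReal.ofReal_mul (by positivity), ← ENNReal.ofReal_mul (by positivity), ← ENNReal.ofReal_mul (by positivity), ← ENNReal.ofReal_mul (by positivity)]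
        congr 1
        rw [Real.mul_rpow (by norm_num : (0:ℝ) ≤ 4) (by positivity)]
        rw [← Real.rpow_add (by norm_num)]
        simp only [← Real.rpow_mul (by norm_num : (0:ℝ) ≤ 2)]
        have e : (2:ℝ) ^ (-(2 * γ * (1 - 1 / q)) * k) = 2 ^ (γ * k * (2 / q)) * 2 ^ ((γ * k + k) * 2) * 2 ^ (-(k:ℝ) * (2 / q)) * 2 ^ (-(k:ℝ) * (1 + 2 * s)) := by
          rw [← Real.rpow_add (by norm_num), ← Real.rpow_add (by norm_num), ← Real.rpow_add (by norm_num)]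
          congr 1
          rw [hs, hγ]; field_simp; ring
        rw [e]; ring
    _ = _ := by
        rw [ENNReal.tsum_mul_right, ENNReal.tsum_mul_left]; ring

lemma cs_aux (S : Set ℝ) (f : ℝ → ℝ≥0∞) (hf : Measurable f) :
    (∫⁻ y in S, f y) ^ (2:ℝ) ≤ volume S * ∫⁻ y in S, f y ^ (2:ℝ) := by
  have h := ENNReal.lintegral_mul_le_Lp_mul_Lq (volume.restrict S) Real.HolderConjugate.two_two
    (f := fun _ => 1) (g := f) aemeasurable_const hf.aemeasurable
  simp only [Pi.mul_apply, one_mul, ENNReal.one_rpow, lintegral_const, Measure.restrict_apply_univ] at h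
  grw [h]
  rw [ENNReal.mul_rpow_of_nonneg _ _ (by norm_num), ← ENNReal.rpow_mul, ← ENNReal.rpow_mul]
  norm_num

lemma jens (f : ℝ → ℂ) (hf : Continuous f) (p l : ℝ) (hl : 0 < l) :
    ‖l⁻¹ • ∫ y in p..p+l, f y‖ₑ ^ (2:ℝ) ≤ ENNReal.ofReal l⁻¹ * ∫⁻ y in Ioc p (p+l), ‖f y‖ₑ ^ (2:ℝ) := by
  rw [enorm_smul, Real.enorm_of_nonneg (by positivity), intervalIntegral.integral_of_le (by linarith)]
  grw [enorm_integral_le_lintegral_enorm]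
  rw [ENNReal.mul_rpow_of_nonneg _ _ (by norm_num)]
  grw [cs_aux _ _ (by fun_prop)]
  rw [Real.volume_Ioc, ← mul_assoc, ENNReal.ofReal_rpow_of_nonneg (by positivity) (by norm_num), ← ENNReal.ofReal_mul (by positivity)]
  gcongr
  simp; field_simp; exact le_rfl

def av (A : ℝ → ℂ) (x δ : ℝ) : ℂ := δ⁻¹ • ∫ y in x..x+δ, A y

lemma av_sub (A : ℝ → ℂ) (hA : Continuous A) (x δ : ℝ) (hδ : 0 < δ) (c : ℂ) :
    c - av A x δ = δ⁻¹ • ∫ y in x..x+δ, (c - A y) := by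
  unfold av
  rw [intervalIntegral.integral_sub (by simp) (hA.intervalIntegrable _ _)]
  simp [hδ.ne', smul_sub]

lemma avg (A : ℝ → ℂ) (hA : Continuous A) (p l p' l' : ℝ) (hl : 0 < l) (hl' : 0 < l') :
    ‖av A p l - av A p' l'‖ₑ ^ (2:ℝ) ≤ ENNReal.ofReal l⁻¹ * ENNReal.ofReal l'⁻¹ *
      ∫⁻ a in Ioc p (p+l), ∫⁻ b in Ioc p' (p'+l'), ‖A a - A b‖ₑ ^ (2:ℝ) := by
  rw [← enorm_neg, neg_sub, av_sub A hA p l hl]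
  grw [jens _ (by fun_prop) _ _ hl]
  rw [mul_assoc]
  gcongr
  have : ∫⁻ a in Ioc p (p+l), ‖av A p' l' - A a‖ₑ ^ (2:ℝ) ≤ ∫⁻ a in Ioc p (p+l), ENNReal.ofReal l'⁻¹ * ∫⁻ b in Ioc p' (p'+l'), ‖A a - A b‖ₑ ^ (2:ℝ) := by
    apply lintegral_mono
    intro a
    simp only
    rw [← enorm_neg, neg_sub, av_sub A hA p' l' hl']
    exact jens _ (by fun_prop) _ _ hl'
  grw [this]
  rw [lintegral_const_mul' _ _ (by simp)]

lemma av_tendsto (A : ℝ → ℂ) (hA : Continuous A) (x r : ℝ) (hr : 0 < r) :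
    Tendsto (fun k : ℕ => av A x ((2:ℝ) ^ (-(k:ℝ)) * r)) atTop (𝓝 (A x)) := by
  have h := (intervalIntegral.integral_hasDerivAt_right (hA.intervalIntegrable x x) (hA.stronglyMeasurableAtFilter _ _) hA.continuousAt).tendsto_slope_zero_right
  simp only [intervalIntegral.integral_same, sub_zero] at h
  refine h.comp (tendsto_nhdsWithin_iff.2 ⟨?_, ?_⟩)
  · rw [show (0:ℝ) = 0 * r by simp]
    apply Tendsto.mul_const
    have : ∀ k : ℕ, (2:ℝ) ^ (-(k:ℝ)) = (1/2)^k := fun k => by rw [Real.rpow_neg (by norm_num)]; simp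
    simp_rw [this]
    exact tendsto_pow_atTop_nhds_zero_of_lt_one (by norm_num) (by norm_num)
  · filter_upwards with k
    simp only [mem_Ioi]; positivity
def NA (A : ℝ → ℂ) (a b : ℝ) : ℝ≥0∞ := ‖A a - A b‖ₑ ^ (2:ℝ)

lemma stp (X Q : ℝ≥0∞) (r s k : ℝ) (hr : 0 < r)
    (hX : X ^ (2:ℝ) ≤ ENNReal.ofReal (4 * (2 ^ k) ^ 2 * r ^ (-2:ℝ)) * Q) :
    ENNReal.ofReal (r ^ (-s)) * X ≤ 2 * (ENNReal.ofReal ((2:ℝ) ^ k) * (ENNReal.ofReal (r ^ (-2 - 2 * s)) * Q) ^ (1/2:ℝ)) := by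
  rw [← ENNReal.rpow_le_rpow_iff (by norm_num : (0:ℝ) < 2)]
  simp only [ENNReal.mul_rpow_of_nonneg _ _ (by norm_num : (0:ℝ) ≤ 2), ENNReal.mul_rpow_of_nonneg _ _ (by norm_num : (0:ℝ) ≤ 1/2), ← ENNReal.rpow_mul]
  grw [hX]
  rw [show (2:ℝ≥0∞) = ENNReal.ofReal 2 by simp]
  norm_num
  rw [← mul_assoc, ← mul_assoc,← mul_assoc]
  simp only [← ENNReal.ofReal_pow (by positivity : (0:ℝ) ≤ 2 ^ k), ← ENNReal.ofReal_pow (by positivity : (0:ℝ) ≤ r ^ (-s))]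
  rw [show (4:ℝ≥0∞) = ENNReal.ofReal 4 by simp, ← ENNReal.ofReal_mul (by positivity), ← ENNReal.ofReal_mul (by positivity), ← ENNReal.ofReal_mul (by positivity)]
  rw [show -2 - 2 * s = -s + -s + (-2) by ring, Real.rpow_add hr, Real.rpow_add hr]
  apply le_of_eq; congr 2; norm_num; ring

lemma chain1 (A : ℝ → ℂ) (hA : Continuous A) (s t r : ℝ) (hr : 0 < r) :
    ENNReal.ofReal (r ^ (-s)) * edist (av A (t + r) r) (A (t + r)) ≤ 2 * Sf (NA A) s t r := by
  have h := edist_le_tsum_of_edist_le_of_tendsto₀ (f := fun k : ℕ => av A (t+r) ((2:ℝ) ^ (-(k:ℝ)) * r)) _ (fun n => le_rfl) (av_tendsto A hA (t+r) r hr)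
  simp only [Nat.cast_zero, neg_zero, Real.rpow_zero, one_mul] at h
  grw [h]
  unfold Sf
  rw [← ENNReal.tsum_mul_left, ← ENNReal.tsum_mul_left]
  apply ENNReal.tsum_le_tsum
  intro k
  apply stp _ _ _ _ _ hr
  rw [edist_eq_enorm_sub]
  grw [avg A hA _ _ _ _ (by positivity) (by positivity)]
  rw [← ENNReal.ofReal_mul (by positivity)]
  apply mul_le_mul'
  · apply ENNReal.ofReal_le_ofReal
    rw [Nat.succ_eq_add_one]
    push_cast
    rw [neg_add, Real.rpow_add (by norm_num), Real.rpow_neg (by norm_num), Real.rpow_neg hr.le, Real.rpow_neg (by norm_num)]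
    have : (0:ℝ) < 2 ^ (k:ℝ) := by positivity
    norm_num
    field_simp
    norm_num
  · unfold Qf
    apply setLIntegral_mono' measurableSet_Ioc
    intro a ha
    apply lintegral_mono_set
    intro b hb
    have e : (2:ℝ) ^ (-((k.succ:ℕ):ℝ)) = (2:ℝ) ^ (-(k:ℝ)) / 2 := by
      push_cast
      rw [neg_add, Real.rpow_add (by norm_num), Real.rpow_neg_one]; rfl
    have : 0 < (2:ℝ) ^ (-(k:ℝ)) * r := by positivity
    rw [e] at hb
    simp only [mem_Ioc] at ha hb
    show |a - b| ≤ _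
    rw [abs_le]
    constructor <;> linarith [ha.1, ha.2, hb.1, hb.2]

lemma chain (A : ℝ → ℂ) (hA : Continuous A) (s t r : ℝ) (hr : 0 < r) :
    ENNReal.ofReal (r ^ (-s)) * ‖A (t + r) - A (t - r)‖ₑ ≤
      4 * (Sf (NA A) s t r + Sf (NA (fun y => A (-y))) s (-t) r) := by
  have hb : ENNReal.ofReal (r ^ (-s)) * edist (av A (t + r) r) (av A (t - 2 * r) r) ≤ 2 * Sf (NA A) s t r := by
    calc _ ≤ 2 * (ENNReal.ofReal ((2:ℝ) ^ ((0:ℕ):ℝ)) * (ENNReal.ofReal (r ^ (-2 - 2 * s)) * Qf (NA A) ((2:ℝ) ^ (-((0:ℕ):ℝ))) t r) ^ (1/2:ℝ)) := by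
          apply stp _ _ _ _ _ hr
          rw [edist_eq_enorm_sub]
          grw [avg A hA _ _ _ _ hr hr]
          rw [← ENNReal.ofReal_mul (by positivity)]
          apply mul_le_mul'
          · apply ENNReal.ofReal_le_ofReal
            rw [Real.rpow_neg hr.le]
            norm_num
            field_simp
            norm_num
          · unfold Qf
            simp only [Nat.cast_zero, neg_zero, Real.rpow_zero, one_mul]
            apply setLIntegral_mono' measurableSet_Ioc
            intro a ha
            apply lintegral_mono_set
            intro b hb
            simp only [mem_Ioc] at ha hb
            show |a - b| ≤ _
            rw [abs_le]
            constructor <;> linarith [ha.1, ha.2, hb.1, hb.2]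
      _ ≤ _ := by
          gcongr
          unfold Sf
          exact ENNReal.le_tsum (f := fun k : ℕ => ENNReal.ofReal ((2:ℝ) ^ (k:ℝ)) *
            (ENNReal.ofReal (r ^ (-2 - 2 * s)) * Qf (NA A) ((2:ℝ) ^ (-(k:ℝ))) t r) ^ (1 / 2 : ℝ)) 0
  have h1 := chain1 A hA s t r hr
  have h2 := chain1 (fun y => A (-y)) (by fun_prop) s (-t) r hr
  have e : av (fun y => A (-y)) (-t + r) r = av A (t - 2 * r) r := by
    unfold av
    rw [intervalIntegral.integral_comp_neg]
    congr 2 <;> ring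
  simp only [e] at h2
  rw [show -(-t+r) = t - r by ring] at h2
  rw [← edist_eq_enorm_sub]
  calc _ ≤ ENNReal.ofReal (r ^ (-s)) * (edist (av A (t + r) r) (A (t + r)) + edist (av A (t + r) r) (av A (t - 2 * r) r) + edist (av A (t - 2 * r) r) (A (t - r))) := by
        gcongr
        rw [edist_comm (av A (t+r) r) (A (t+r))]
        exact edist_triangle4 _ _ _ _
    _ ≤ 2 * Sf (NA A) s t r + 2 * Sf (NA A) s t r + 2 * Sf (NA (fun y => A (-y))) s (-t) r := by
        rw [mul_add, mul_add]; gcongr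
    _ ≤ 2 * Sf (NA A) s t r + 2 * Sf (NA A) s t r + 4 * Sf (NA (fun y => A (-y))) s (-t) r := by
        gcongr; norm_num
    _ = _ := by ring
lemma meas_NA (A : ℝ → ℂ) (hA : Continuous A) : Measurable (Function.uncurry (NA A)) := by
  unfold NA Function.uncurry
  have h1 : Continuous fun z : ℝ × ℝ => A z.1 - A z.2 := by fun_prop
  exact (h1.enorm.measurable).pow_const _

def LL (q : ℝ) (A : ℝ → ℂ) (t : ℝ) : ℝ≥0∞ :=
  ∫⁻ r in Ioi (0:ℝ), ENNReal.ofReal (r ^ 2) * (ENNReal.ofReal r⁻¹ * ‖A (t + r) - A (t - r)‖ₑ) ^ q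

lemma meas_LL (q : ℝ) (A : ℝ → ℂ) (hA : Continuous A) : Measurable (LL q A) := by
  unfold LL
  apply Measurable.lintegral_prod_right' (f := fun z : ℝ × ℝ => ENNReal.ofReal (z.2 ^ 2) * (ENNReal.ofReal z.2⁻¹ * ‖A (z.1 + z.2) - A (z.1 - z.2)‖ₑ) ^ q)
  have h1 : Continuous fun z : ℝ × ℝ => A (z.1 + z.2) - A (z.1 - z.2) := by fun_prop
  have := h1.enorm.measurable
  fun_prop

lemma oneD (q s : ℝ) (hq : 4 < q) (hs : s = 1 - 3 / q) : ∃ C : ℝ≥0∞, C < ⊤ ∧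
    ∀ A : ℝ → ℂ, Continuous A →
    ∫⁻ t, (LL q A t) ^ (2 / q) ≤
      C * ∫⁻ a, ∫⁻ b, ENNReal.ofReal (|a - b| ^ (-1 - 2 * s)) * NA A a b := by
  obtain ⟨C, hC, H⟩ := P3 q s hq hs
  have hq0 : 0 < q := by linarith
  have h2q : 2 / q ≤ 1 := by rw [div_le_one hq0]; linarith
  have hK : (4:ℝ≥0∞) ^ q * 2 ^ (q - 1) < ⊤ := by
    apply ENNReal.mul_lt_top <;> apply ENNReal.rpow_lt_top_of_nonneg (by linarith) (by simp)
  set K := (4:ℝ≥0∞) ^ q * 2 ^ (q - 1)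
  refine ⟨K ^ (2 / q) * (C + C), ENNReal.mul_lt_top (ENNReal.rpow_lt_top_of_nonneg (by positivity) hK.ne) (by simp [hC]), ?_⟩
  intro A hA
  set B : ℝ → ℂ := fun y => A (-y) with hB
  have hBc : Continuous B := by fun_prop
  have hd : ∀ A : ℝ → ℂ, ∀ a, NA A a a = 0 := by intro A a; simp [NA]
  have gB : ∫⁻ a, ∫⁻ b, ENNReal.ofReal (|a - b| ^ (-1 - 2 * s)) * NA B a b = ∫⁻ a, ∫⁻ b, ENNReal.ofReal (|a - b| ^ (-1 - 2 * s)) * NA A a b := by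
    have e1 : ∀ a, ∫⁻ b, ENNReal.ofReal (|a - b| ^ (-1 - 2 * s)) * NA A a b = ∫⁻ b, ENNReal.ofReal (|a - -b| ^ (-1 - 2 * s)) * NA A a (-b) :=
      fun a => (lintegral_neg_eq_self (fun b => ENNReal.ofReal (|a - b| ^ (-1 - 2 * s)) * NA A a b) ).symm
    simp_rw [e1]
    rw [← lintegral_neg_eq_self (fun a => ∫⁻ b, ENNReal.ofReal (|a - -b| ^ (-1 - 2 * s)) * NA A a (-b))]
    apply lintegral_congr; intro a
    apply lintegral_congr; intro b
    rw [show -a - -b = -(a - b) by ring, abs_neg]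
    rfl
  have hmS : ∀ A : ℝ → ℂ, Continuous A → Measurable (fun z : ℝ × ℝ => Sf (NA A) s z.1 z.2) := fun A hA => meas_Sf _ (meas_NA A hA) s
  set R : (ℝ → ℂ) → ℝ → ℝ≥0∞ := fun A t => ∫⁻ r in Ioi (0:ℝ), (Sf (NA A) s t r) ^ q * ENNReal.ofReal r⁻¹ with hR
  have hRm : ∀ A : ℝ → ℂ, Continuous A → Measurable (R A) := by
    intro A hA
    apply Measurable.lintegral_prod_right' (f := fun z : ℝ × ℝ => (Sf (NA A) s z.1 z.2) ^ q * ENNReal.ofReal z.2⁻¹)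
    have := hmS A hA
    fun_prop
  have inner : ∀ t, LL q A t ≤ K * (R A t + R B (-t)) := by
    intro t
    have hm1 : Measurable fun r => Sf (NA A) s t r := (hmS A hA).comp (f := fun r => (t, r)) (by fun_prop)
    have hm2 : Measurable fun r => Sf (NA B) s (-t) r := (hmS B hBc).comp (f := fun r => (-t, r)) (by fun_prop)
    rw [hR]
    simp only
    rw [← lintegral_add_left (by fun_prop), ← lintegral_const_mul _ (by fun_prop)]
    unfold LL
    apply setLIntegral_mono' measurableSet_Ioi
    intro r hr
    have hr : 0 < r := hr
    calc _ = (ENNReal.ofReal (r ^ (-s)) * ‖A (t + r) - A (t - r)‖ₑ) ^ q * ENNReal.ofReal r⁻¹ := by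
          rw [ENNReal.mul_rpow_of_nonneg _ _ hq0.le, ENNReal.mul_rpow_of_nonneg _ _ hq0.le,
            ENNReal.ofReal_rpow_of_nonneg (by positivity) hq0.le, ENNReal.ofReal_rpow_of_nonneg (by positivity) hq0.le,
            ← mul_assoc, ← ENNReal.ofReal_mul (by positivity), mul_right_comm, ← ENNReal.ofReal_mul (by positivity)]
          congr 2
          rw [← Real.rpow_mul hr.le, ← Real.rpow_neg_one, ← Real.rpow_mul hr.le, ← Real.rpow_natCast, ← Real.rpow_add hr, ← Real.rpow_add hr]
          congr 1
          rw [hs]; field_simp; push_cast; ring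
      _ ≤ (4 * (Sf (NA A) s t r + Sf (NA B) s (-t) r)) ^ q * ENNReal.ofReal r⁻¹ := by
          exact mul_le_mul' (ENNReal.rpow_le_rpow (chain A hA s t r hr) hq0.le) le_rfl
      _ ≤ (4 ^ q * (2 ^ (q - 1) * (Sf (NA A) s t r ^ q + Sf (NA B) s (-t) r ^ q))) * ENNReal.ofReal r⁻¹ := by
          rw [ENNReal.mul_rpow_of_nonneg _ _ hq0.le]
          gcongr
          exact ENNReal.rpow_add_le_mul_rpow_add_rpow _ _ (by linarith)
      _ = _ := by ring
  calc _ ≤ ∫⁻ t, K ^ (2/q) * (R A t ^ (2/q) + R B (-t) ^ (2/q)) := by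
        apply lintegral_mono; intro t; simp only
        grw [inner t]
        rw [ENNReal.mul_rpow_of_nonneg _ _ (by positivity)]
        gcongr
        exact ENNReal.rpow_add_le_add_rpow _ _ (by positivity) h2q
    _ = K ^ (2/q) * ((∫⁻ t, R A t ^ (2/q)) + ∫⁻ t, R B t ^ (2/q)) := by
        have := hRm A hA
        have := hRm B hBc
        rw [lintegral_const_mul _ (by fun_prop), lintegral_add_left (by fun_prop), lintegral_neg_eq_self (fun t => R B t ^ (2/q))]
    _ ≤ _ := by
        have i1 := H _ (meas_NA A hA) (hd A)
        have i2 := H _ (meas_NA B hBc) (hd B)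
        rw [gB] at i2
        refine (mul_le_mul' le_rfl (add_le_add i1 i2)).trans (le_of_eq ?_)
        rw [← add_mul, mul_assoc]
abbrev E2 := EuclideanSpace ℝ (Fin 2)

def glue (a : ℝ) (w : E2) : E3 := WithLp.toLp 2 (Fin.cons a w.ofLp)

lemma glue_norm (a : ℝ) (w : E2) : ‖glue a w‖ = √(a ^ 2 + ‖w‖ ^ 2) := by
  rw [EuclideanSpace.norm_eq, EuclideanSpace.norm_eq, Real.sq_sqrt (by positivity)]
  simp [glue, Fin.sum_univ_succ]

lemma fub (g : E3 → ℂ) (hg : Integrable g) : ∫ ξ, g ξ = ∫ a, ∫ w : E2, g (glue a w) := by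
  have m1 := PiLp.volume_preserving_toLp (Fin 3)
  have m2 := (volume_preserving_piFinSuccAbove (fun _ : Fin 3 => ℝ) 0).symm
  have m3 := PiLp.volume_preserving_toLp (Fin 2)
  have me1 := (MeasurableEquiv.toLp 2 (Fin 3 → ℝ)).measurableEmbedding
  have me2 := (MeasurableEquiv.piFinSuccAbove (fun _ : Fin 3 => ℝ) 0).symm.measurableEmbedding
  rw [← m1.integral_comp me1, ← m2.integral_comp me2]
  have hi : Integrable (fun x => g (WithLp.toLp 2 ((MeasurableEquiv.piFinSuccAbove (fun _ : Fin 3 => ℝ) 0).symm x))) (volume.prod volume) := by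
    have := (m1.integrable_comp_emb me1).2 hg
    exact (m2.integrable_comp_emb me2).2 this
  rw [show (volume : Measure (ℝ × (Fin 2 → ℝ))) = volume.prod volume from rfl]
  rw [integral_prod _ hi]
  congr 1; ext a
  rw [← m3.integral_comp (MeasurableEquiv.toLp 2 (Fin 2 → ℝ)).measurableEmbedding]
  congr 1; ext y
  simp [glue, MeasurableEquiv.piFinSuccAbove, Fin.insertNthEquiv]

def FF (m : ℝ → ℂ) (R a : ℝ) : ℂ := ∫ ρ in a..R, (ρ : ℂ) * m ρ

lemma FF_deriv (m : ℝ → ℂ) (hm : Continuous m) (R a : ℝ) :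
    HasDerivAt (FF m R) (-((a:ℂ) * m a)) a := by
  have hc : Continuous fun ρ : ℝ => (ρ : ℂ) * m ρ := by fun_prop
  exact intervalIntegral.integral_hasDerivAt_left (hc.intervalIntegrable _ _) (hc.stronglyMeasurableAtFilter _ _) hc.continuousAt

lemma FF_even (m : ℝ → ℂ) (hm : Continuous m) (he : ∀ ρ, m (-ρ) = m ρ) (R a : ℝ) :
    FF m R (-a) = FF m R a := by
  have hc : Continuous fun ρ : ℝ => (ρ : ℂ) * m ρ := by fun_prop
  have h := intervalIntegral.integral_add_adjacent_intervals (hc.intervalIntegrable (μ := volume) (-a) a) (hc.intervalIntegrable a R)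
  have h0 : ∫ ρ in (-a)..a, (ρ:ℂ) * m ρ = 0 := by
    have := intervalIntegral.integral_comp_neg (a := -a) (b := a) (fun ρ : ℝ => (ρ:ℂ) * m ρ)
    simp only [neg_neg, he, Complex.ofReal_neg, neg_mul, intervalIntegral.integral_neg] at this
    exact self_eq_neg.1 this.symm
  unfold FF
  rw [← h, h0, zero_add]

lemma FF_abs (m : ℝ → ℂ) (hm : Continuous m) (he : ∀ ρ, m (-ρ) = m ρ) (R a : ℝ) :
    FF m R |a| = FF m R a := by
  rcases abs_choice a with h | h <;> rw [h]
  exact FF_even m hm he R a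

lemma FF_zero (m : ℝ → ℂ) (hm : Continuous m) (he : ∀ ρ, m (-ρ) = m ρ) (R : ℝ) (hR : ∀ ρ, R ≤ |ρ| → m ρ = 0) (hR0 : 0 < R) (a : ℝ) (ha : R ≤ |a|) : FF m R a = 0 := by
  rw [← FF_abs m hm he]
  unfold FF
  apply intervalIntegral.integral_zero_ae
  filter_upwards with x hx
  rw [uIoc_of_ge ha] at hx
  rw [hR x (by rw [abs_of_pos (by linarith [hx.1])]; exact hx.1.le), mul_zero]

lemma inner2 (m : ℝ → ℂ) (hm : Continuous m) (he : ∀ ρ, m (-ρ) = m ρ) (R : ℝ)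
    (hR : ∀ ρ, R ≤ |ρ| → m ρ = 0) (hR0 : 0 < R) (a : ℝ) :
    ∫ w : E2, m √(a ^ 2 + ‖w‖ ^ 2) = 2 * π * FF m R a := by
  have h := integral_fun_norm_addHaar (volume : Measure E2) (fun y => m √(a ^ 2 + y ^ 2))
  rw [h]
  have hv : volume.real (Metric.ball (0 : E2) 1) = π := by
    rw [measureReal_def, EuclideanSpace.volume_ball_fin_two]; simp [Real.pi_pos.le]
  have hi : ∫ y in Ioi (0:ℝ), -((y:ℂ) * m √(a ^ 2 + y ^ 2)) = 0 - FF m R √(a ^ 2 + 0 ^ 2) := by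
    apply integral_Ioi_of_hasDerivAt_of_tendsto (f := fun y => FF m R √(a ^ 2 + y ^ 2))
    · have : Continuous (FF m R) := continuous_iff_continuousAt.2 fun a => (FF_deriv m hm R a).continuousAt
      fun_prop
    · intro y hy
      have hy : 0 < y := hy
      have h1 : HasDerivAt (fun y => √(a ^ 2 + y ^ 2)) (2 * y / (2 * √(a ^ 2 + y ^ 2))) y := by
        apply HasDerivAt.sqrt _ (by positivity)
        simpa using (hasDerivAt_pow 2 y).const_add (a ^ 2)
      have h2 := (FF_deriv m hm R √(a ^ 2 + y ^ 2)).scomp y h1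
      convert h2 using 1
      · rfl
      have : (0:ℝ) < √(a ^ 2 + y ^ 2) := by positivity
      have : ((√(a ^ 2 + y ^ 2) : ℝ) : ℂ) ≠ 0 := by exact_mod_cast this.ne'
      rw [Complex.real_smul]
      push_cast
      field_simp
    · apply Integrable.integrableOn
      apply Continuous.integrable_of_hasCompactSupport (by fun_prop)
      apply HasCompactSupport.intro (K := Metric.closedBall 0 R) (isCompact_closedBall _ _)
      intro y hy
      rw [hR, mul_zero, neg_zero]
      simp at hy
      rw [abs_of_nonneg (Real.sqrt_nonneg _)]
      apply Real.le_sqrt_of_sq_le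
      rw [← sq_abs y]
      nlinarith [sq_nonneg a]
    · apply tendsto_const_nhds.congr'
      filter_upwards [eventually_ge_atTop R] with y hy
      rw [FF_zero m hm he R hR hR0]
      rw [abs_of_nonneg (Real.sqrt_nonneg _)]
      apply Real.le_sqrt_of_sq_le
      nlinarith [sq_nonneg a]
  rw [integral_neg, zero_sub, neg_inj] at hi
  simp only [hv, finrank_euclideanSpace, Fintype.card_fin, Complex.real_smul]
  simp only [Nat.add_one_sub_one, pow_one]
  rw [hi, zero_pow (by norm_num), add_zero, Real.sqrt_sq_eq_abs, FF_abs m hm he]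
  simp [nsmul_eq_mul]; ring
lemma radF (m : ℝ → ℂ) (hm : Continuous m) (he : ∀ ρ, m (-ρ) = m ρ) (R : ℝ)
    (hR : ∀ ρ, R ≤ |ρ| → m ρ = 0) (hR0 : 0 < R) (x : E3) (hx : x ≠ 0) :
    𝓕⁻ (fun ξ : E3 => m ‖ξ‖) x = (‖x‖ : ℂ)⁻¹ * ∫ ρ : ℝ, m ρ * ρ * (Real.sin (2 * π * ‖x‖ * ρ) : ℂ) := by
  set r := ‖x‖ with hr
  have hr0 : 0 < r := norm_pos_iff.2 hx
  set y : E3 := EuclideanSpace.single 0 r with hy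
  have hxy : ‖x‖ = ‖y‖ := by rw [hy]; simp [hr]
  have e1 : 𝓕⁻ (fun ξ : E3 => m ‖ξ‖) x = 𝓕⁻ (fun ξ : E3 => m ‖ξ‖) y := by
    have := Real.fourierInv_comp_linearIsometry (Submodule.reflection (Submodule.span ℝ {x - y})ᗮ) (fun ξ : E3 => m ‖ξ‖) x
    rw [Submodule.reflection_sub hxy] at this
    rw [← this]
    refine congrArg (fun f : E3 → ℂ => 𝓕⁻ f x) ?_
    funext ξ; simp
  have hR2 : HasCompactSupport m := by
    apply HasCompactSupport.intro (K := Metric.closedBall 0 R) (isCompact_closedBall _ _)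
    intro z hz
    apply hR; simp at hz; exact hz.le
  have hF : Continuous (FF m R) := continuous_iff_continuousAt.2 fun a => (FF_deriv m hm R a).continuousAt
  have hFc : HasCompactSupport (FF m R) := by
    apply HasCompactSupport.intro (K := Metric.closedBall 0 R) (isCompact_closedBall _ _)
    intro z hz
    apply FF_zero m hm he R hR hR0; simp at hz; exact hz.le
  rw [e1, Real.fourierInv_eq', fub]
  · have e2 : ∀ a : ℝ, ∫ w : E2, Complex.exp (↑(2 * π * inner ℝ (glue a w) y) * Complex.I) • m ‖glue a w‖ = 
        2 * π * (Complex.exp (2 * π * r * Complex.I * a) * FF m R a) := by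
      intro a
      have : ∀ w : E2, inner ℝ (glue a w) y = r * a := by
        intro w; simp [hy, glue, EuclideanSpace.inner_single_right]
      simp_rw [this, glue_norm, smul_eq_mul]
      rw [integral_const_mul, inner2 m hm he R hR hR0 a]
      push_cast
      ring_nf
    simp_rw [e2]
    rw [integral_const_mul]
    have hexp : ∀ a : ℝ, HasDerivAt (fun a : ℝ => Complex.exp (2 * π * r * Complex.I * a) / (2 * π * r * Complex.I)) (Complex.exp (2 * π * r * Complex.I * a)) a := by
      intro a
      have h1 : HasDerivAt (fun a : ℝ => 2 * π * r * Complex.I * (a:ℂ)) (2 * π * r * Complex.I) a := by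
        simpa using (Complex.ofRealCLM.hasDerivAt (x := a)).const_mul (2 * π * r * Complex.I)
      have h2 := h1.cexp.div_const (2 * π * r * Complex.I)
      rwa [mul_div_cancel_right₀] at h2
      have := Real.pi_pos.ne'
      simp [hr0.ne', this]
    have ibp := integral_mul_deriv_eq_deriv_mul_of_integrable (u := FF m R) (u' := fun a => -((a:ℂ) * m a))
      (v := fun a : ℝ => Complex.exp (2 * π * r * Complex.I * a) / (2 * π * r * Complex.I)) (v' := fun a : ℝ => Complex.exp (2 * π * r * Complex.I * a))
      (fun a _ => FF_deriv m hm R a) (fun a _ => hexp a) 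
      ((by fun_prop : Continuous _).integrable_of_hasCompactSupport hFc.mul_right)
      ((by fun_prop : Continuous _).integrable_of_hasCompactSupport (HasCompactSupport.mul_right hR2.mul_left.neg))
      ((by fun_prop : Continuous _).integrable_of_hasCompactSupport hFc.mul_right)
    have e3 : ∫ a : ℝ, Complex.exp (2 * π * r * Complex.I * a) * FF m R a = ∫ a : ℝ, FF m R a * Complex.exp (2 * π * r * Complex.I * a) := by
      congr 1; ext a; ring
    rw [e3, ibp, ← integral_neg]
    have e4 : ∀ a : ℝ, -(-((a:ℂ) * m a) * (Complex.exp (2 * π * r * Complex.I * a) / (2 * π * r * Complex.I))) = 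
       (1 / (2 * π * r * Complex.I)) * (m a * a * (Real.cos (2 * π * r * a) : ℂ)) + (1 / (2 * π * r)) * (m a * a * (Real.sin (2 * π * r * a) : ℂ)) := by
      intro a
      rw [show (2 * π * r * Complex.I * a : ℂ) = ((2 * π * r * a : ℝ):ℂ) * Complex.I by push_cast; ring, Complex.exp_mul_I, Complex.ofReal_cos, Complex.ofReal_sin]
      have h1 : (π:ℂ) ≠ 0 := by exact_mod_cast Real.pi_pos.ne'
      have h2 : (r:ℂ) ≠ 0 := by exact_mod_cast hr0.ne'
      field_simp [Complex.I_ne_zero]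
    simp_rw [e4]
    have hodd : ∫ a : ℝ, m a * a * (Real.cos (2 * π * r * a) : ℂ) = 0 := by
      have := integral_neg_eq_self (fun a : ℝ => m a * a * (Real.cos (2 * π * r * a) : ℂ)) volume
      simp only [he, Complex.ofReal_neg, mul_neg, neg_mul, Real.cos_neg, integral_neg] at this
      exact self_eq_neg.1 this.symm
    have i1 : Integrable (fun a : ℝ => m a * a * (Real.cos (2 * π * r * a) : ℂ)) := by
      apply Continuous.integrable_of_hasCompactSupport (by fun_prop)
      exact hR2.mul_right.mul_right
    have i2 : Integrable (fun a : ℝ => m a * a * (Real.sin (2 * π * r * a) : ℂ)) := by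
      apply Continuous.integrable_of_hasCompactSupport (by fun_prop)
      exact hR2.mul_right.mul_right
    rw [integral_add (i1.const_mul _) (i2.const_mul _), integral_const_mul, integral_const_mul, hodd]
    have h1 : (π:ℂ) ≠ 0 := by exact_mod_cast Real.pi_pos.ne'
    have h2 : (r:ℂ) ≠ 0 := by exact_mod_cast hr0.ne'
    field_simp
    ring
  · apply Continuous.integrable_of_hasCompactSupport (by fun_prop)
    apply HasCompactSupport.intro (K := Metric.closedBall 0 R) (isCompact_closedBall _ _)
    intro z hz
    rw [hR, smul_zero]; simp at hz; simpa using hz.le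
def mS (χ : ℝ → ℝ) (φ ψ : ℝ → ℂ) (t ρ : ℝ) : ℂ :=
  (χ ρ : ℂ) * ((Real.cos (2 * π * t * ρ) : ℂ) * φ ρ + ((t * Real.sinc (2 * π * t * ρ) : ℝ) : ℂ) * ψ ρ)

def kS (χ : ℝ → ℝ) (φ ψ : ℝ → ℂ) (ρ : ℝ) : ℂ :=
  (χ ρ : ℂ) * ((ρ : ℂ) * φ ρ / (2 * Complex.I) - ψ ρ / (4 * π))

lemma sinc_id (t ρ : ℝ) : ρ * (t * Real.sinc (2 * π * t * ρ)) = Real.sin (2 * π * t * ρ) / (2 * π) := by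
  have := Real.pi_pos
  by_cases h : t * ρ = 0
  · rw [mul_assoc, h]
    rw [show ρ * (t * Real.sinc (2 * π * 0)) = (t * ρ) * Real.sinc (2 * π * 0) by ring, h]; simp
  · have h1 : t ≠ 0 := by rintro rfl; simp at h
    have h2 : ρ ≠ 0 := by rintro rfl; simp at h
    rw [Real.sinc_of_ne_zero (by positivity)]
    field_simp

lemma wave_id (χ : ℝ → ℝ) (φ ψ : ℝ → ℂ) (hχ : Continuous χ) (hφ : Continuous φ) (hψ : Continuous ψ)
    (eχ : ∀ ρ, χ (-ρ) = χ ρ) (eφ : ∀ ρ, φ (-ρ) = φ ρ) (eψ : ∀ ρ, ψ (-ρ) = ψ ρ)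
    (hc : HasCompactSupport χ) (t r : ℝ) :
    ∫ ρ : ℝ, mS χ φ ψ t ρ * ρ * (Real.sin (2 * π * r * ρ) : ℂ) =
      𝓕⁻ (kS χ φ ψ) (t + r) - 𝓕⁻ (kS χ φ ψ) (t - r) := by
  have hcc : HasCompactSupport (fun ρ => (χ ρ : ℂ)) := hc.comp_left (g := fun x : ℝ => (x:ℂ)) (by simp)
  have hk : Continuous (kS χ φ ψ) := by unfold kS; fun_prop
  have hkc : HasCompactSupport (kS χ φ ψ) := by unfold kS; exact hcc.mul_right
  have hsinc := Real.continuous_sinc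
  have hint : ∀ y : ℝ, Integrable (fun ρ : ℝ => Complex.exp (↑(2 * π * inner ℝ ρ y) * Complex.I) • kS χ φ ψ ρ) := by
    intro y
    simp only [smul_eq_mul]
    apply Continuous.integrable_of_hasCompactSupport (by fun_prop)
    exact hkc.mul_left
  rw [Real.fourierInv_eq', Real.fourierInv_eq', ← integral_sub (hint _) (hint _)]
  set O : ℝ → ℂ := fun ρ => (χ ρ : ℂ) * (Real.sin (2 * π * r * ρ) : ℂ) * (Complex.I * (Real.sin (2 * π * t * ρ) : ℂ) * ρ * φ ρ + (Real.cos (2 * π * t * ρ) : ℂ) * ψ ρ / (2 * π * Complex.I)) with hO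
  have hO0 : ∫ ρ, O ρ = 0 := by
    have := integral_neg_eq_self O volume
    have h2 : ∀ ρ, O (-ρ) = - O ρ := by
      intro ρ
      simp only [hO, eχ, eφ, eψ, mul_neg, Real.sin_neg, Real.cos_neg, Complex.ofReal_neg]; ring
    simp only [h2, integral_neg] at this
    exact self_eq_neg.1 this.symm
  have hOi : Integrable O := by
    apply Continuous.integrable_of_hasCompactSupport (by fun_prop)
    exact hcc.mul_right.mul_right
  have hmi : Integrable (fun ρ : ℝ => mS χ φ ψ t ρ * ρ * (Real.sin (2 * π * r * ρ) : ℂ)) := by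
    unfold mS
    apply Continuous.integrable_of_hasCompactSupport (by fun_prop)
    exact hcc.mul_right.mul_right.mul_right
  rw [← add_zero (∫ ρ : ℝ, mS χ φ ψ t ρ * ρ * (Real.sin (2 * π * r * ρ) : ℂ)), ← hO0, ← integral_add hmi hOi]
  congr 1; ext ρ
  have hs := congrArg (fun x : ℝ => (x:ℂ)) (sinc_id t ρ)
  simp only [Complex.ofReal_mul, Complex.ofReal_div] at hs
  have h1 : (π:ℂ) ≠ 0 := by exact_mod_cast Real.pi_pos.ne'
  have e1 : ∀ y : ℝ, Complex.exp (↑(2 * π * inner ℝ ρ y) * Complex.I) = (Real.cos (2 * π * y * ρ) : ℂ) + (Real.sin (2 * π * y * ρ) : ℂ) * Complex.I := by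
    intro y
    rw [Complex.exp_mul_I, Complex.ofReal_cos, Complex.ofReal_sin]
    simp only [RCLike.inner_apply, conj_trivial]
    rw [show 2 * π * (y * ρ) = 2 * π * y * ρ by ring]
  simp only [e1, smul_eq_mul]
  rw [show 2 * π * (t + r) * ρ = 2 * π * t * ρ + 2 * π * r * ρ by ring, show 2 * π * (t - r) * ρ = 2 * π * t * ρ - 2 * π * r * ρ by ring, Real.cos_add, Real.cos_sub, Real.sin_add, Real.sin_sub]
  simp only [mS, kS, hO]
  push_cast at hs ⊢
  have e2 : ∀ X : ℂ, (χ ρ : ℂ) * (X + ↑t * ↑(sinc (2 * π * t * ρ)) * ψ ρ) * ρ = (χ ρ : ℂ) * (X * ρ + Complex.sin (2 * ↑π * ↑t * ↑ρ) / (2 * π) * ψ ρ) := by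
    intro X; rw [← hs]; ring
  rw [e2]
  have hI : Complex.I ^ 2 = -1 := Complex.I_sq
  have hinv : ∀ X : ℂ, X / (2 * Complex.I) = - X * Complex.I / 2 := by
    intro X; field_simp; rw [hI]; ring
  have hinv2 : ∀ X : ℂ, X / (2 * π * Complex.I) = - X * Complex.I / (2 * π) := by
    intro X; field_simp; rw [hI]; ring
  rw [hinv, hinv2]
  field_simp
  ring_nf
  simp only [hI]
  ring
lemma cont_finv (k : ℝ → ℂ) (hk : Integrable k) : Continuous (𝓕⁻ k) := by
  have := VectorFourier.fourierIntegral_continuous (L := -(innerₗ ℝ)) Real.continuous_fourierChar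
    (by simp; fun_prop) hk
  refine this.congr fun x => ?_
  rw [Real.fourierInv_eq]
  simp [VectorFourier.fourierIntegral]

lemma cont_f (u : E3 → ℂ) : Continuous (𝓕 u) := by
  by_cases h : Integrable u
  · have := VectorFourier.fourierIntegral_continuous (L := (innerₗ E3)) Real.continuous_fourierChar
      (by simp; fun_prop) h
    refine this.congr fun x => ?_
    rw [Real.fourier_eq]
    simp [VectorFourier.fourierIntegral]
  · have : 𝓕 u = fun _ => 0 := by
      ext ξ
      rw [Real.fourier_eq]
      apply integral_undef
      rwa [Real.fourierIntegral_convergent_iff]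
    rw [this]; exact continuous_const

lemma rad_f (u : E3 → ℝ) (hu : IsRadial u) (ξ η : E3) (h : ‖ξ‖ = ‖η‖) :
    𝓕 (fun x => (u x : ℂ)) ξ = 𝓕 (fun x => (u x : ℂ)) η := by
  have := Real.fourier_comp_linearIsometry (Submodule.reflection (Submodule.span ℝ {ξ - η})ᗮ) (fun x : E3 => (u x : ℂ)) ξ
  rw [Submodule.reflection_sub h] at this
  rw [← this]
  refine congrArg (fun f : E3 → ℂ => 𝓕 f ξ) ?_
  funext x
  simp only [Function.comp]
  rw [hu]; simp

def prof (u : E3 → ℝ) (ρ : ℝ) : ℂ := 𝓕 (fun x => (u x : ℂ)) (EuclideanSpace.single 0 ρ)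

lemma prof_cont (u : E3 → ℝ) : Continuous (prof u) := by
  unfold prof
  apply (cont_f _).comp
  have : (fun ρ : ℝ => (EuclideanSpace.single 0 ρ : E3)) = fun ρ : ℝ => ρ • (EuclideanSpace.single 0 1 : E3) := by
    ext ρ i; simp [EuclideanSpace.single]
  show Continuous (fun ρ : ℝ => (EuclideanSpace.single 0 ρ : E3))
  rw [this]; fun_prop

lemma prof_norm (u : E3 → ℝ) (hu : IsRadial u) (ξ : E3) : 𝓕 (fun x => (u x : ℂ)) ξ = prof u ‖ξ‖ := by
  apply rad_f u hu; simp

lemma prof_even (u : E3 → ℝ) (hu : IsRadial u) (ρ : ℝ) : prof u (-ρ) = prof u ρ := by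
  apply rad_f u hu; simp

def cut (n : ℕ) (ρ : ℝ) : ℝ := max 0 (min 1 (n + 1 - |ρ|))

lemma cut_cont (n : ℕ) : Continuous (cut n) := by unfold cut; fun_prop
lemma cut_even (n : ℕ) (ρ : ℝ) : cut n (-ρ) = cut n ρ := by simp [cut]
lemma cut_zero (n : ℕ) (ρ : ℝ) (h : (n:ℝ) + 1 ≤ |ρ|) : cut n ρ = 0 := by
  unfold cut; apply max_eq_left; apply (min_le_right _ _).trans; linarith
lemma cut_nonneg (n : ℕ) (ρ : ℝ) : 0 ≤ cut n ρ := le_max_left _ _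
lemma cut_le (n : ℕ) (ρ : ℝ) : cut n ρ ≤ 1 := by
  unfold cut; simp
lemma cut_comp (n : ℕ) : HasCompactSupport (cut n) := by
  apply HasCompactSupport.intro (K := Metric.closedBall 0 (n+1)) (isCompact_closedBall _ _)
  intro z hz
  apply cut_zero; simp at hz; exact hz.le
lemma cut_tendsto (ρ : ℝ) : Tendsto (fun n => cut n ρ) atTop (𝓝 1) := by
  apply tendsto_const_nhds.congr'
  obtain ⟨N, hN⟩ := exists_nat_ge |ρ|
  filter_upwards [eventually_ge_atTop N] with n hn
  have : (N:ℝ) ≤ n := by exact_mod_cast hn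
  unfold cut
  rw [min_eq_left (by linarith)]; simp

lemma sym_eq (u₀ u₁ : E3 → ℝ) (h0 : IsRadial u₀) (h1 : IsRadial u₁) (t : ℝ) (ξ : E3) :
    waveSymbol t u₀ u₁ ξ = mS (fun _ => 1) (prof u₀) (prof u₁) t ‖ξ‖ := by
  unfold waveSymbol mS
  rw [prof_norm u₀ h0, prof_norm u₁ h1, Complex.ofReal_one, one_mul]
  congr 2
  split_ifs with h
  · rw [h]; simp
  · congr 1
    have := sinc_id t ‖ξ‖
    rw [mul_comm, ← eq_div_iff h] at this
    rw [this]; field_simp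

lemma mS_cut (χ : ℝ → ℝ) (φ ψ : ℝ → ℂ) (t ρ : ℝ) : mS χ φ ψ t ρ = χ ρ * mS (fun _ => 1) φ ψ t ρ := by
  unfold mS; simp

def uN (φ ψ : ℝ → ℂ) (n : ℕ) (t : ℝ) (x : E3) : ℂ := 𝓕⁻ (fun ξ : E3 => mS (cut n) φ ψ t ‖ξ‖) x

lemma mS_cont (χ : ℝ → ℝ) (φ ψ : ℝ → ℂ) (hχ : Continuous χ) (hφ : Continuous φ) (hψ : Continuous ψ) (t : ℝ) :
    Continuous (mS χ φ ψ t) := by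
  have := Real.continuous_sinc
  unfold mS; fun_prop

lemma uN_eq (φ ψ : ℝ → ℂ) (hφ : Continuous φ) (hψ : Continuous ψ)
    (eφ : ∀ ρ, φ (-ρ) = φ ρ) (eψ : ∀ ρ, ψ (-ρ) = ψ ρ) (n : ℕ) (t : ℝ) (x : E3) (hx : x ≠ 0) :
    uN φ ψ n t x = (‖x‖ : ℂ)⁻¹ * (𝓕⁻ (kS (cut n) φ ψ) (t + ‖x‖) - 𝓕⁻ (kS (cut n) φ ψ) (t - ‖x‖)) := by
  unfold uN
  rw [radF _ (mS_cont _ φ ψ (cut_cont n) hφ hψ t) _ (n + 1) _ (by positivity) x hx, wave_id _ φ ψ (cut_cont n) hφ hψ (cut_even n) eφ eψ (cut_comp n)]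
  · intro ρ; unfold mS; simp [cut_even, eφ, eψ, Real.cos_neg, Real.sinc_neg]
  · intro ρ hρ
    rw [mS_cut, cut_zero n ρ hρ]; simp

lemma uN_int (φ ψ : ℝ → ℂ) (hφ : Continuous φ) (hψ : Continuous ψ)
    (eφ : ∀ ρ, φ (-ρ) = φ ρ) (eψ : ∀ ρ, ψ (-ρ) = ψ ρ) (q : ℝ) (n : ℕ) (t : ℝ) 
    (hc : Continuous (𝓕⁻ (kS (cut n) φ ψ))) :
    ∫⁻ x, ‖uN φ ψ n t x‖ₑ ^ q = (3 * volume (Metric.ball (0:E3) 1)) * LL q (𝓕⁻ (kS (cut n) φ ψ)) t := by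
  set A := 𝓕⁻ (kS (cut n) φ ψ)
  have h := lint_norm (volume : Measure E3) (fun y => (ENNReal.ofReal y⁻¹ * ‖A (t + y) - A (t - y)‖ₑ) ^ q) (by fun_prop)
  rw [finrank_euclideanSpace, Fintype.card_fin] at h
  unfold LL
  norm_num at h ⊢
  rw [← h]
  apply lintegral_congr_ae
  have : ∀ᵐ x : E3, x ≠ 0 := by simp [ae_iff]
  filter_upwards [this] with x hx
  rw [uN_eq φ ψ hφ hψ eφ eψ n t x hx, enorm_mul]
  congr 2
  rw [← Complex.ofReal_inv]
  rw [← ofReal_norm_eq_enorm]; congr 1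
  simp

lemma uN_lim (φ ψ : ℝ → ℂ) (hφ : Continuous φ) (hψ : Continuous ψ) (t : ℝ)
    (hi : Integrable (fun ξ : E3 => mS (fun _ => 1) φ ψ t ‖ξ‖)) (x : E3) :
    Tendsto (fun n => uN φ ψ n t x) atTop (𝓝 (𝓕⁻ (fun ξ : E3 => mS (fun _ => 1) φ ψ t ‖ξ‖) x)) := by
  unfold uN
  simp_rw [Real.fourierInv_eq']
  apply tendsto_integral_of_dominated_convergence (fun ξ : E3 => ‖mS (fun _ => 1) φ ψ t ‖ξ‖‖)
  · intro n
    have := mS_cont _ φ ψ (cut_cont n) hφ hψ t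
    exact (by fun_prop : Continuous _).aestronglyMeasurable
  · exact hi.norm
  · intro n
    filter_upwards with ξ
    rw [norm_smul, Complex.norm_exp_ofReal_mul_I, one_mul, mS_cut, norm_mul]
    have := cut_nonneg n ‖ξ‖
    have h2 := cut_le n ‖ξ‖
    rw [Complex.norm_real, Real.norm_of_nonneg this]
    nlinarith [norm_nonneg (mS (fun _ => 1) φ ψ t ‖ξ‖)]
  · filter_upwards with ξ
    apply Tendsto.const_smul
    simp_rw [mS_cut (cut _)]
    have := ((Complex.continuous_ofReal.tendsto 1).comp (cut_tendsto ‖ξ‖)).mul_const (mS (fun _ => 1) φ ψ t ‖ξ‖)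
    simpa using this

lemma cont_finv3 (k : E3 → ℂ) (hk : Integrable k) : Continuous (𝓕⁻ k) := by
  have := VectorFourier.fourierIntegral_continuous (L := -(innerₗ E3)) Real.continuous_fourierChar
    (by simp; fun_prop) hk
  refine this.congr fun x => ?_
  rw [Real.fourierInv_eq]
  simp [VectorFourier.fourierIntegral]

lemma uN_cont (φ ψ : ℝ → ℂ) (hφ : Continuous φ) (hψ : Continuous ψ) (n : ℕ) (t : ℝ) :
    Continuous (uN φ ψ n t) := by
  have h : Continuous (fun ξ : E3 => mS (cut n) φ ψ t ‖ξ‖) :=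
    (mS_cont _ φ ψ (cut_cont n) hφ hψ t).comp continuous_norm
  have hc : HasCompactSupport (fun ξ : E3 => mS (cut n) φ ψ t ‖ξ‖) := by
    apply HasCompactSupport.intro (K := Metric.closedBall 0 (n+1)) (isCompact_closedBall _ _)
    intro z hz
    simp only [Metric.mem_closedBall, dist_zero_right, not_le] at hz
    rw [mS_cut, cut_zero n _ (by rw [abs_norm]; exact hz.le)]; simp
  exact cont_finv3 _ (h.integrable_of_hasCompactSupport hc)

lemma sob_sq (s : ℝ) (u : E3 → ℝ) (hu : IsRadial u) :
    sobNorm s u ^ (2:ℝ) = (3 * volume (Metric.ball (0:E3) 1)) *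
      ∫⁻ y in Ioi (0:ℝ), ENNReal.ofReal (y ^ (2 * s + 2)) * ‖prof u y‖ₑ ^ (2:ℝ) := by
  unfold sobNorm
  rw [← ENNReal.rpow_mul, show (1/2:ℝ) * 2 = 1 by norm_num, ENNReal.rpow_one]
  have := prof_cont u
  have h := lint_norm (volume : Measure E3) (fun y => ENNReal.ofReal (y ^ (2 * s)) * ‖prof u y‖ₑ ^ (2:ℝ)) (by fun_prop)
  rw [finrank_euclideanSpace, Fintype.card_fin] at h
  simp_rw [prof_norm u hu]
  refine h.trans ?_
  push_cast
  congr 1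
  apply setLIntegral_congr_fun measurableSet_Ioi
  intro y hy
  have hy : 0 < y := hy
  simp only
  rw [← mul_assoc, ← ENNReal.ofReal_mul (by positivity), Real.rpow_add hy, mul_comm (y ^ (2 * s))]
  norm_num

lemma kS_bound (s : ℝ) (u₀ u₁ : E3 → ℝ) (h0 : IsRadial u₀) (h1 : IsRadial u₁) (n : ℕ) :
    ∫⁻ ρ : ℝ, ENNReal.ofReal (|ρ| ^ (2 * s)) * ‖kS (cut n) (prof u₀) (prof u₁) ρ‖ₑ ^ (2:ℝ) ≤
      2 * (sobNorm s u₀ ^ (2:ℝ) + sobNorm (s - 1) u₁ ^ (2:ℝ)) := by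
  have c0 := prof_cont u₀
  have c1 := prof_cont u₁
  have pa : ∀ u : E3 → ℝ, IsRadial u → ∀ ρ, prof u |ρ| = prof u ρ := by
    intro u hu ρ
    rcases abs_choice ρ with h | h <;> rw [h]
    exact prof_even u hu ρ
  have hb : ∀ ρ : ℝ, ENNReal.ofReal (|ρ| ^ (2 * s)) * ‖kS (cut n) (prof u₀) (prof u₁) ρ‖ₑ ^ (2:ℝ) ≤
      2 * (ENNReal.ofReal (|ρ| ^ (2 * s)) * (ENNReal.ofReal (|ρ| ^ 2) * ‖prof u₀ |ρ|‖ₑ ^ (2:ℝ) + ‖prof u₁ |ρ|‖ₑ ^ (2:ℝ))) := by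
    intro ρ
    rw [pa u₀ h0, pa u₁ h1]
    have e1 : ‖kS (cut n) (prof u₀) (prof u₁) ρ‖ₑ ≤ ENNReal.ofReal |ρ| * ‖prof u₀ ρ‖ₑ + ‖prof u₁ ρ‖ₑ := by
      rw [← ofReal_norm_eq_enorm, ← ofReal_norm_eq_enorm, ← ofReal_norm_eq_enorm, ← ENNReal.ofReal_mul (by positivity), ← ENNReal.ofReal_add (by positivity) (by positivity)]
      apply ENNReal.ofReal_le_ofReal
      unfold kS
      rw [norm_mul, Complex.norm_real, Real.norm_of_nonneg (cut_nonneg n ρ)]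
      have i1 : ‖(ρ:ℂ) * prof u₀ ρ / (2 * Complex.I)‖ ≤ |ρ| * ‖prof u₀ ρ‖ := by
        simp only [norm_div, norm_mul, Complex.norm_real, Complex.norm_I, Complex.norm_ofNat, Real.norm_eq_abs, mul_one]
        have : 0 ≤ |ρ| * ‖prof u₀ ρ‖ := by positivity
        linarith
      have i2 : ‖prof u₁ ρ / (4 * π)‖ ≤ ‖prof u₁ ρ‖ := by
        simp only [norm_div, norm_mul, Complex.norm_real, Complex.norm_ofNat, Real.norm_eq_abs, abs_of_pos Real.pi_pos]
        apply div_le_self (norm_nonneg _)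
        linarith [Real.pi_gt_three]
      have i3 := norm_sub_le ((ρ:ℂ) * prof u₀ ρ / (2 * Complex.I)) (prof u₁ ρ / (4 * π))
      calc _ ≤ 1 * ‖(ρ:ℂ) * prof u₀ ρ / (2 * Complex.I) - prof u₁ ρ / (4 * π)‖ := by
            gcongr; exact cut_le n ρ
        _ ≤ _ := by linarith
    have e2 := ENNReal.rpow_le_rpow e1 (by norm_num : (0:ℝ) ≤ 2)
    have e3 := ENNReal.rpow_add_le_mul_rpow_add_rpow (ENNReal.ofReal |ρ| * ‖prof u₀ ρ‖ₑ) ‖prof u₁ ρ‖ₑ (by norm_num : (1:ℝ) ≤ 2)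
    rw [show (2:ℝ) - 1 = 1 by norm_num, ENNReal.rpow_one, ENNReal.mul_rpow_of_nonneg _ _ (by norm_num : (0:ℝ) ≤ 2), ENNReal.ofReal_rpow_of_nonneg (by positivity) (by norm_num), Real.rpow_two] at e3
    calc _ ≤ ENNReal.ofReal (|ρ| ^ (2 * s)) * (2 * (ENNReal.ofReal (|ρ| ^ 2) * ‖prof u₀ ρ‖ₑ ^ (2:ℝ) + ‖prof u₁ ρ‖ₑ ^ (2:ℝ))) := by
          exact mul_le_mul' le_rfl (e2.trans e3)
      _ = _ := by ring
  have hv : (2:ℝ≥0∞) ≤ 3 * volume (Metric.ball (0:E3) 1) := by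
    rw [EuclideanSpace.volume_ball_fin_three, show (2:ℝ≥0∞) = ENNReal.ofReal 2 by simp, show (3:ℝ≥0∞) = ENNReal.ofReal 3 by simp]
    rw [ENNReal.ofReal_one, one_pow, one_mul, ← ENNReal.ofReal_mul (by norm_num)]
    apply ENNReal.ofReal_le_ofReal
    linarith [Real.pi_gt_three]
  calc _ ≤ ∫⁻ ρ : ℝ, 2 * (ENNReal.ofReal (|ρ| ^ (2 * s)) * (ENNReal.ofReal (|ρ| ^ 2) * ‖prof u₀ |ρ|‖ₑ ^ (2:ℝ) + ‖prof u₁ |ρ|‖ₑ ^ (2:ℝ))) := lintegral_mono hb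
    _ = 2 * (2 * ∫⁻ y in Ioi (0:ℝ), ENNReal.ofReal (y ^ (2 * s)) * (ENNReal.ofReal (y ^ 2) * ‖prof u₀ y‖ₑ ^ (2:ℝ) + ‖prof u₁ y‖ₑ ^ (2:ℝ))) := by
        rw [lintegral_const_mul' _ _ (by simp), lint_abs (fun y => ENNReal.ofReal (y ^ (2 * s)) * (ENNReal.ofReal (y ^ 2) * ‖prof u₀ y‖ₑ ^ (2:ℝ) + ‖prof u₁ y‖ₑ ^ (2:ℝ))) (by fun_prop)]
    _ ≤ 2 * ((3 * volume (Metric.ball (0:E3) 1)) * ∫⁻ y in Ioi (0:ℝ), ENNReal.ofReal (y ^ (2 * s)) * (ENNReal.ofReal (y ^ 2) * ‖prof u₀ y‖ₑ ^ (2:ℝ) + ‖prof u₁ y‖ₑ ^ (2:ℝ))) := by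
        exact mul_le_mul' le_rfl (mul_le_mul' hv le_rfl)
    _ = _ := by
        rw [sob_sq s u₀ h0, sob_sq (s - 1) u₁ h1, ← mul_add, ← lintegral_add_left (by fun_prop)]
        congr 2
        apply setLIntegral_congr_fun measurableSet_Ioi
        intro y hy
        have hy : 0 < y := hy
        simp only
        rw [mul_add, ← mul_assoc, ← ENNReal.ofReal_mul (by positivity), show 2 * (s - 1) + 2 = 2 * s by ring, Real.rpow_add hy]
        norm_num
/-- Radial `L²_t L^q_x` Strichartz estimates: for radial data, `q > 4` and
`1/2 + 3/q = 3/2 - s`, the free wave satisfies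
`‖u‖_{L²_t L^q_x(ℝ×ℝ³)} ≤ C(q) (‖u₀‖_{Ḣ^s} + ‖u₁‖_{Ḣ^{s-1}})`. -/
theorem radial_strichartz_LtwoLq (q s : ℝ) (hq : 4 < q)
    (hscal : 1 / 2 + 3 / q = 3 / 2 - s) :
    ∃ C : ℝ≥0∞, C < ⊤ ∧
      ∀ u₀ u₁ : E3 → ℝ, IsRadial u₀ → IsRadial u₁ →
        MemSob s u₀ → MemSob (s - 1) u₁ →
        mixNorm 2 (ENNReal.ofReal q) Set.univ (fun t => waveProp t u₀ u₁) ≤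
          C * (sobNorm s u₀ + sobNorm (s - 1) u₁) := by
  have hq0 : 0 < q := by linarith
  have hs : s = 1 - 3 / q := by linarith
  have h3 : 3 / q < 3 / 4 := by gcongr
  have h3' : 0 < 3 / q := by positivity
  obtain ⟨C1, hC1, H1⟩ := oneD q s hq hs
  obtain ⟨C2, hC2, H2⟩ := gagl s (by linarith) (by linarith)
  set V : ℝ≥0∞ := 3 * volume (Metric.ball (0:E3) 1) with hV
  have hVt : V < ⊤ := ENNReal.mul_lt_top (by simp) measure_ball_lt_top
  set K : ℝ≥0∞ := V ^ (2 / q) * (C1 * (C2 * 2)) with hK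
  have hKt : K < ⊤ := ENNReal.mul_lt_top (ENNReal.rpow_lt_top_of_nonneg (by positivity) hVt.ne)
    (ENNReal.mul_lt_top hC1 (ENNReal.mul_lt_top hC2 (by simp)))
  refine ⟨K ^ (1 / 2 : ℝ), ENNReal.rpow_lt_top_of_nonneg (by positivity) hKt.ne, ?_⟩
  intro u₀ u₁ h0 h1 _ _
  set φ := prof u₀ with hφ'
  set ψ := prof u₁ with hψ'
  have hφ : Continuous φ := prof_cont u₀
  have hψ : Continuous ψ := prof_cont u₁
  have eφ := prof_even u₀ h0
  have eψ := prof_even u₁ h1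
  set k : ℕ → ℝ → ℂ := fun n => kS (cut n) φ ψ with hk
  have hkc : ∀ n, Continuous (k n) := by
    intro n
    have := cut_cont n
    simp only [hk]; unfold kS; fun_prop
  have hks : ∀ n, HasCompactSupport (k n) := by
    intro n
    have hcc : HasCompactSupport (fun ρ => (cut n ρ : ℂ)) := (cut_comp n).comp_left (g := fun x : ℝ => (x:ℂ)) (by simp)
    simp only [hk]; unfold kS; exact hcc.mul_right
  have hA : ∀ n, Continuous (𝓕⁻ (k n)) := fun n => cont_finv _ ((hkc n).integrable_of_hasCompactSupport (hks n))
  have hmain : ∀ n, ∫⁻ t, (V * LL q (𝓕⁻ (k n)) t) ^ (2 / q) ≤ K * (sobNorm s u₀ + sobNorm (s - 1) u₁) ^ (2:ℝ) := by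
    intro n
    have hm := meas_LL q _ (hA n)
    simp_rw [ENNReal.mul_rpow_of_nonneg _ _ (by positivity : 0 ≤ 2 / q)]
    rw [lintegral_const_mul _ (by fun_prop)]
    have i1 := H1 _ (hA n)
    have i2 := H2 _ (hkc n) (hks n)
    have i3 := kS_bound s u₀ u₁ h0 h1 n
    have i4 := ENNReal.add_rpow_le_rpow_add (sobNorm s u₀) (sobNorm (s - 1) u₁) (by norm_num : (1:ℝ) ≤ 2)
    calc _ ≤ V ^ (2 / q) * (C1 * (C2 * (2 * (sobNorm s u₀ + sobNorm (s - 1) u₁) ^ (2:ℝ)))) := by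
          refine mul_le_mul' le_rfl (i1.trans (mul_le_mul' le_rfl (i2.trans (mul_le_mul' le_rfl (i3.trans (mul_le_mul' le_rfl i4))))))
      _ = _ := by rw [hK]; ring
  have hpt : ∀ t, eLpNorm (waveProp t u₀ u₁) (ENNReal.ofReal q) volume ^ (2:ℝ) ≤
      liminf (fun n => (V * LL q (𝓕⁻ (k n)) t) ^ (2 / q)) atTop := by
    intro t
    rw [eLpNorm_eq_lintegral_rpow_enorm_toReal (by simpa using hq0) ENNReal.ofReal_ne_top, ENNReal.toReal_ofReal hq0.le, ← ENNReal.rpow_mul, show 1 / q * 2 = 2 / q by ring]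
    have hl := Monotone.map_liminf_of_continuousAt (F := atTop) (ENNReal.monotone_rpow_of_nonneg (by positivity : 0 ≤ 2 / q)) (fun n => V * LL q (𝓕⁻ (k n)) t) (ENNReal.continuous_rpow_const.continuousAt)
    refine le_trans ?_ hl.le
    refine ENNReal.rpow_le_rpow ?_ (by positivity)
    have hu : ∀ n, V * LL q (𝓕⁻ (k n)) t = ∫⁻ x, ‖uN φ ψ n t x‖ₑ ^ q := fun n => (uN_int φ ψ hφ hψ eφ eψ q n t (hA n)).symm
    simp_rw [hu]
    have hsym : waveSymbol t u₀ u₁ = fun ξ => mS (fun _ => 1) φ ψ t ‖ξ‖ := funext fun ξ => sym_eq u₀ u₁ h0 h1 t ξ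
    have hmeas : ∀ n, AEMeasurable (fun x => ‖uN φ ψ n t x‖ₑ ^ q) volume := by
      intro n
      exact ((uN_cont φ ψ hφ hψ n t).enorm.measurable.pow_const q).aemeasurable
    refine le_trans ?_ (lintegral_liminf_le' hmeas)
    apply lintegral_mono
    intro x
    by_cases hi : Integrable (fun ξ : E3 => mS (fun _ => 1) φ ψ t ‖ξ‖)
    · have hlim := (ENNReal.continuous_rpow_const (y := q)).continuousAt.tendsto.comp (uN_lim φ ψ hφ hψ t hi x).enorm
      have := hlim.liminf_eq
      simp only [Function.comp_def] at this
      simp only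
      rw [this]
      refine ENNReal.rpow_le_rpow ?_ hq0.le
      unfold waveProp
      rw [hsym, ← ofReal_norm_eq_enorm, ← ofReal_norm_eq_enorm]
      exact ENNReal.ofReal_le_ofReal (Complex.abs_re_le_norm _)
    · have : waveProp t u₀ u₁ x = 0 := by
        unfold waveProp
        rw [hsym, Real.fourierInv_eq, integral_undef]
        · simp
        · have := Real.fourierIntegral_convergent_iff (f := fun ξ : E3 => mS (fun _ => 1) φ ψ t ‖ξ‖) (μ := volume) (-x)
          simp only [inner_neg_right, neg_neg] at this
          rwa [this]
      simp [this, hq0]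
  unfold mixNorm
  rw [if_neg (by simp)]
  simp only [ENNReal.toReal_ofNat, Measure.restrict_univ]
  calc _ ≤ (K * (sobNorm s u₀ + sobNorm (s - 1) u₁) ^ (2:ℝ)) ^ (1 / 2 : ℝ) := by
        refine ENNReal.rpow_le_rpow ?_ (by positivity)
        refine (lintegral_mono hpt).trans ?_
        refine (lintegral_liminf_le fun n => ?_).trans ?_
        · have hm := meas_LL q _ (hA n)
          fun_prop
        · refine (liminf_le_liminf (Eventually.of_forall hmain)).trans ?_
          simp
    _ = _ := by
        rw [ENNReal.mul_rpow_of_nonneg _ _ (by norm_num), ← ENNReal.rpow_mul]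
        norm_num

end
end

section
/- (Littlewood–Paley projections and the Morawetz weight.) Let 3 < p < 5. There is a constant C, independent of j and v, such that for every j ∈ ℤ and every measurable v : ℝ³ → ℝ with ∫ |v(x)|^{p+1}/|x| dx < ∞, ∫_{ℝ³} |P_{≤j} v(x)|^{p+1}/|x| dx + ∫_{ℝ³} |P_{≥j} v(x)|^{p+1}/|x| dx ≤ C ∫_{ℝ³} |v(x)|^{p+1}/|x| dx. -/
open MeasureTheory Real Set Filter Topology
open scoped FourierTransform ENNReal NNReal

noncomputable section

lemma aux_scale (g : E3 → ℝ≥0∞) (hg : Measurable g) (R : ℝ) (hR : 0 < R) :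
    ENNReal.ofReal (R ^ 3) * ∫⁻ x, g (R • x) = ∫⁻ x, g x := by
  have h1 : ∫⁻ x, g (R • x) = ∫⁻ x, g x ∂(Measure.map (R • ·) (volume : Measure E3)) := by
    rw [lintegral_map hg (measurable_const_smul R)]
  rw [h1, Measure.map_addHaar_smul _ hR.ne', lintegral_smul_measure, smul_eq_mul, ← mul_assoc,
    ← ENNReal.ofReal_mul (by positivity)]
  have : Module.finrank ℝ E3 = 3 := by simp
  rw [this, abs_of_pos (by positivity), mul_inv_cancel₀ (by positivity)]
  simp

lemma aux_ball : ∫⁻ x in Metric.closedBall (0 : E3) 1, ‖x‖ₑ⁻¹ < ⊤ := by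
  have h : LocallyIntegrable (fun x : E3 => ‖x‖⁻¹) volume := by
    refine locallyIntegrable_of_norm_le_rpow (C := 1) (α := 1) (by simp) (by simp) ?_ ?_
    · filter_upwards with x
      simp [Real.rpow_neg_one]
    · exact (measurable_norm.inv).aestronglyMeasurable
  have h2 := (h.integrableOn_isCompact (isCompact_closedBall (0 : E3) 1)).2
  refine lt_of_eq_of_lt ?_ h2
  apply lintegral_congr_ae
  apply ae_restrict_of_ae
  have : ∀ᵐ x : E3, x ≠ 0 := by
    rw [ae_iff]; simp
  filter_upwards [this] with x hx
  rw [enorm_inv (by simpa using hx)]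
  simp

lemma aux_kernel (ψ : SchwartzMap E3 ℝ) : ∃ C : ℝ≥0∞, C < ⊤ ∧ C ≠ 0 ∧ ∀ y : E3,
    ∫⁻ x, ‖ψ (x - y)‖ₑ * ‖x‖ₑ⁻¹ ≤ C * ‖y‖ₑ⁻¹ := by
  obtain ⟨M, hM0, hM⟩ := ψ.decay 1 0
  have hM' : ∀ x, ‖x‖ₑ * ‖ψ x‖ₑ ≤ ENNReal.ofReal M := by
    intro x
    have := hM x
    rw [norm_iteratedFDeriv_zero, pow_one] at this
    rw [← ofReal_norm, ← ofReal_norm, ← ENNReal.ofReal_mul (norm_nonneg _)]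
    exact ENNReal.ofReal_le_ofReal this
  have hψ0 : Measurable (fun x => ψ x) := ψ.continuous.measurable
  have hψm : Measurable (fun x => ‖ψ x‖ₑ) := hψ0.enorm
  have hA : ∫⁻ x, ‖ψ x‖ₑ < ⊤ := (ψ.integrable (μ := volume)).2
  have hB : ∫⁻ x, ‖x‖ₑ * ‖ψ x‖ₑ < ⊤ := by
    have := (ψ.integrable_pow_mul volume 1).2
    refine lt_of_eq_of_lt ?_ this
    apply lintegral_congr
    intro x
    simp [enorm_mul]
  set A := ∫⁻ x, ‖ψ x‖ₑ
  set B := ∫⁻ x, ‖x‖ₑ * ‖ψ x‖ₑ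
  set D := ∫⁻ x in Metric.closedBall (0 : E3) 1, ‖x‖ₑ⁻¹
  have hD : D < ⊤ := aux_ball
  refine ⟨ENNReal.ofReal M * D + B + A + 1, ?_, by simp, ?_⟩
  · simp only [ENNReal.add_lt_top]
    exact ⟨⟨⟨ENNReal.mul_lt_top ENNReal.ofReal_lt_top hD, hB⟩, hA⟩, ENNReal.one_lt_top⟩
  intro y
  rw [← div_eq_mul_inv, ENNReal.le_div_iff_mul_le (Or.inr (by simp)) (Or.inl (by simp))]
  rw [← lintegral_mul_const _ (by fun_prop)]
  have hsh : ∫⁻ x, ‖ψ (x - y)‖ₑ = A := lintegral_sub_right_eq_self (fun x => ‖ψ x‖ₑ) y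
  have hshB : ∫⁻ x, ‖x - y‖ₑ * ‖ψ (x - y)‖ₑ = B :=
    lintegral_sub_right_eq_self (fun x => ‖x‖ₑ * ‖ψ x‖ₑ) y
  have hpt : ∀ x : E3, ‖ψ (x - y)‖ₑ * ‖x‖ₑ⁻¹ * ‖y‖ₑ ≤
      (Metric.closedBall (0 : E3) 1).indicator (fun x => ENNReal.ofReal M * ‖x‖ₑ⁻¹) x
        + ‖x - y‖ₑ * ‖ψ (x - y)‖ₑ + ‖ψ (x - y)‖ₑ := by
    intro x
    have hy : ‖y‖ₑ ≤ ‖x - y‖ₑ + ‖x‖ₑ := by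
      have := enorm_sub_le (E := E3) (a := x) (b := x - y)
      rw [sub_sub_cancel] at this
      rwa [add_comm]
    calc ‖ψ (x - y)‖ₑ * ‖x‖ₑ⁻¹ * ‖y‖ₑ ≤ ‖ψ (x - y)‖ₑ * ‖x‖ₑ⁻¹ * (‖x - y‖ₑ + ‖x‖ₑ) := by gcongr
      _ = (‖x - y‖ₑ * ‖ψ (x - y)‖ₑ) * ‖x‖ₑ⁻¹ + ‖ψ (x - y)‖ₑ * (‖x‖ₑ * ‖x‖ₑ⁻¹) := by ring
      _ ≤ _ := by
        refine add_le_add ?_ ?_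
        · by_cases hx : x ∈ Metric.closedBall (0 : E3) 1
          · rw [indicator_of_mem hx]
            exact le_add_right (mul_le_mul_left (hM' _) _)
          · rw [indicator_of_notMem hx, zero_add]
            refine mul_le_of_le_one_right' ?_
            rw [ENNReal.inv_le_one, ← ofReal_norm, ENNReal.one_le_ofReal]
            simp at hx
            exact hx.le
        · exact mul_le_of_le_one_right' (ENNReal.mul_inv_le_one _)
  calc _ ≤ _ := lintegral_mono hpt
    _ = ENNReal.ofReal M * D + B + A := by
      rw [lintegral_add_right _ (by fun_prop), lintegral_add_right _ (by fun_prop), hsh, hshB,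
        lintegral_indicator Metric.isClosed_closedBall.measurableSet,
        lintegral_const_mul _ (by fun_prop)]
    _ ≤ _ := le_self_add

lemma aux_jensen (q : ℝ) (hq : 1 < q) (k f : E3 → ℝ≥0∞) (hk : Measurable k) (hf : Measurable f) :
    (∫⁻ y, k y * f y) ^ q ≤ (∫⁻ y, k y) ^ (q - 1) * ∫⁻ y, k y * f y ^ q := by
  have hc : (q / (q - 1)).HolderConjugate q := (Real.HolderConjugate.conjExponent hq).symm
  have hq0 : 0 < q := by linarith
  have hq1 : 0 < q - 1 := by linarith
  have h := ENNReal.lintegral_mul_le_Lp_mul_Lq volume hc (f := fun y => k y ^ ((q - 1) / q))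
    (g := fun y => k y ^ (1 / q) * f y) (by fun_prop) (by fun_prop)
  have e1 : ∀ y, (k y ^ ((q - 1) / q)) ^ (q / (q - 1)) = k y := by
    intro y
    rw [← ENNReal.rpow_mul, div_mul_div_cancel₀ hq0.ne', div_self hq1.ne', ENNReal.rpow_one]
  have e2 : ∀ y, (k y ^ (1 / q) * f y) ^ q = k y * f y ^ q := by
    intro y
    rw [ENNReal.mul_rpow_of_nonneg _ _ hq0.le, ← ENNReal.rpow_mul, one_div_mul_cancel hq0.ne',
      ENNReal.rpow_one]
  have e3 : ∀ y, k y ^ ((q - 1) / q) * (k y ^ (1 / q) * f y) = k y * f y := by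
    intro y
    rw [← mul_assoc, ← ENNReal.rpow_add_of_nonneg _ _ (by positivity) (by positivity),
      ← add_div, sub_add_cancel, div_self hq0.ne', ENNReal.rpow_one]
  simp only [Pi.mul_apply, e1, e2, e3] at h
  calc _ ≤ _ := ENNReal.rpow_le_rpow h hq0.le
    _ = _ := by
      rw [ENNReal.mul_rpow_of_nonneg _ _ hq0.le, ← ENNReal.rpow_mul, ← ENNReal.rpow_mul,
        one_div_mul_cancel hq0.ne', ENNReal.rpow_one]
      congr 2
      field_simp

lemma aux_main (q : ℝ) (hq : 1 < q) (ψ : SchwartzMap E3 ℝ) :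
    ∃ C : ℝ≥0∞, C < ⊤ ∧ ∀ (N : ℝ), 0 < N → ∀ (v : E3 → ℝ), Measurable v →
      ∫⁻ x : E3, ‖lpLe ⇑ψ N v x‖ₑ ^ q * ‖x‖ₑ⁻¹ ≤ C * ∫⁻ x : E3, ‖v x‖ₑ ^ q * ‖x‖ₑ⁻¹ := by
  obtain ⟨C, hC, hC0, hCy⟩ := aux_kernel ψ
  have hψ0 : Measurable (fun x => ψ x) := ψ.continuous.measurable
  have hψm : Measurable (fun x => ‖ψ x‖ₑ) := hψ0.enorm
  have hA : ∫⁻ x, ‖ψ x‖ₑ < ⊤ := (ψ.integrable (μ := volume)).2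
  set A := ∫⁻ x, ‖ψ x‖ₑ with hAdef
  refine ⟨A ^ (q - 1) * C, ENNReal.mul_lt_top (ENNReal.rpow_lt_top_of_nonneg (by linarith) hA.ne) hC,
    ?_⟩
  intro N hN v hv
  set c := ENNReal.ofReal (N ^ 3) with hc
  have hk1 : ∀ x : E3, ∫⁻ y, c * ‖ψ (N • (x - y))‖ₑ = A := by
    intro x
    rw [lintegral_const_mul _ (by fun_prop),
      lintegral_sub_left_eq_self (fun y => ‖ψ (N • y)‖ₑ) x]
    exact aux_scale _ hψm N hN
  have hk2 : ∀ y : E3, ∫⁻ x, c * ‖ψ (N • (x - y))‖ₑ * ‖x‖ₑ⁻¹ ≤ C * ‖y‖ₑ⁻¹ := by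
    intro y
    have hn : ‖N‖ₑ ≠ 0 := by simpa using hN.ne'
    have hinv : ∀ x : E3, ‖N‖ₑ * ‖N • x‖ₑ⁻¹ = ‖x‖ₑ⁻¹ := by
      intro x
      rw [enorm_smul, ENNReal.mul_inv (Or.inl hn) (Or.inl (by simp)), ← mul_assoc,
        ENNReal.mul_inv_cancel hn (by simp), one_mul]
    calc ∫⁻ x, c * ‖ψ (N • (x - y))‖ₑ * ‖x‖ₑ⁻¹
        = ∫⁻ x, (c * ‖N‖ₑ) * (‖ψ (N • x - N • y)‖ₑ * ‖N • x‖ₑ⁻¹) := by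
          apply lintegral_congr
          intro x
          rw [← hinv x, smul_sub]
          ring
      _ = ‖N‖ₑ * (c * ∫⁻ x, ‖ψ (N • x - N • y)‖ₑ * ‖N • x‖ₑ⁻¹) := by
          rw [lintegral_const_mul _ (by fun_prop)]
          ring
      _ = ‖N‖ₑ * ∫⁻ x, ‖ψ (x - N • y)‖ₑ * ‖x‖ₑ⁻¹ := by
          rw [hc, aux_scale (fun x => ‖ψ (x - N • y)‖ₑ * ‖x‖ₑ⁻¹) (by fun_prop) N hN]
      _ ≤ ‖N‖ₑ * (C * ‖N • y‖ₑ⁻¹) := by gcongr; exact hCy _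
      _ = C * ‖y‖ₑ⁻¹ := by rw [← hinv y]; ring
  have hpt : ∀ x, ‖lpLe ⇑ψ N v x‖ₑ ^ q ≤
      A ^ (q - 1) * ∫⁻ y, c * ‖ψ (N • (x - y))‖ₑ * ‖v y‖ₑ ^ q := by
    intro x
    rw [← hk1 x]
    refine le_trans ?_ (aux_jensen q hq (fun y => c * ‖ψ (N • (x - y))‖ₑ) (fun y => ‖v y‖ₑ)
      (by fun_prop) (by fun_prop))
    apply ENNReal.rpow_le_rpow _ (by linarith)
    refine (enorm_integral_le_lintegral_enorm _).trans (le_of_eq ?_)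
    apply lintegral_congr
    intro y
    rw [enorm_mul, enorm_mul, hc, Real.enorm_of_nonneg (by positivity : 0 ≤ N ^ 3)]
  have hm : Measurable (fun z : E3 × E3 => c * ‖ψ (N • (z.1 - z.2))‖ₑ * ‖v z.2‖ₑ ^ q * ‖z.1‖ₑ⁻¹) := by
    have : Measurable (fun z : E3 × E3 => ‖ψ (N • (z.1 - z.2))‖ₑ) := by
      exact hψm.comp (by fun_prop)
    fun_prop
  calc ∫⁻ x : E3, ‖lpLe ⇑ψ N v x‖ₑ ^ q * ‖x‖ₑ⁻¹
      ≤ ∫⁻ x : E3, A ^ (q - 1) * ∫⁻ y, c * ‖ψ (N • (x - y))‖ₑ * ‖v y‖ₑ ^ q * ‖x‖ₑ⁻¹ := by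
        apply lintegral_mono
        intro x
        dsimp only
        rw [lintegral_mul_const _ (by fun_prop), ← mul_assoc]
        gcongr
        exact hpt x
    _ = A ^ (q - 1) * ∫⁻ y : E3, ∫⁻ x, c * ‖ψ (N • (x - y))‖ₑ * ‖v y‖ₑ ^ q * ‖x‖ₑ⁻¹ := by
        rw [lintegral_const_mul _ hm.lintegral_prod_right', lintegral_lintegral_swap hm.aemeasurable]
    _ ≤ A ^ (q - 1) * ∫⁻ y : E3, C * (‖v y‖ₑ ^ q * ‖y‖ₑ⁻¹) := by
        gcongr with y
        calc ∫⁻ x, c * ‖ψ (N • (x - y))‖ₑ * ‖v y‖ₑ ^ q * ‖x‖ₑ⁻¹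
            = ∫⁻ x, ‖v y‖ₑ ^ q * (c * ‖ψ (N • (x - y))‖ₑ * ‖x‖ₑ⁻¹) := by
              apply lintegral_congr; intro x; ring
          _ = ‖v y‖ₑ ^ q * ∫⁻ x, c * ‖ψ (N • (x - y))‖ₑ * ‖x‖ₑ⁻¹ := by
              rw [lintegral_const_mul _ (by fun_prop)]
          _ ≤ ‖v y‖ₑ ^ q * (C * ‖y‖ₑ⁻¹) := by gcongr; exact hk2 y
          _ = _ := by ring
    _ = _ := by rw [lintegral_const_mul _ (by fun_prop), mul_assoc]

/-- Littlewood–Paley projections and the Morawetz weight: for `3 < p < 5`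
there is a constant `C`, independent of `j ∈ ℤ` and `v`, with
`∫ |P_{≤j}v|^{p+1}/|x| + ∫ |P_{≥j}v|^{p+1}/|x| ≤ C ∫ |v|^{p+1}/|x|`. -/
theorem littlewoodPaley_morawetz_weight (p : ℝ) (hp3 : 3 < p) (hp5 : p < 5)
    (ψ : SchwartzMap E3 ℝ) (hψ : IsLPKernel ⇑ψ) :
    ∃ C : ℝ≥0∞, C < ⊤ ∧
      ∀ (j : ℤ) (v : E3 → ℝ), Measurable v →
        (∫⁻ x : E3, (‖v x‖₊ : ℝ≥0∞) ^ (p + 1) / (‖x‖₊ : ℝ≥0∞)) < ⊤ →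
        (∫⁻ x : E3, (‖lpLe ⇑ψ ((2 : ℝ) ^ j) v x‖₊ : ℝ≥0∞) ^ (p + 1) / (‖x‖₊ : ℝ≥0∞)) +
            (∫⁻ x : E3,
              (‖v x - lpLe ⇑ψ ((2 : ℝ) ^ j) v x‖₊ : ℝ≥0∞) ^ (p + 1) / (‖x‖₊ : ℝ≥0∞)) ≤
          C * ∫⁻ x : E3, (‖v x‖₊ : ℝ≥0∞) ^ (p + 1) / (‖x‖₊ : ℝ≥0∞) := by
  have hq : 1 < p + 1 := by linarith
  obtain ⟨C, hC, h⟩ := aux_main (p + 1) hq ψ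
  have h2 : (2 : ℝ≥0∞) ^ (p + 1 - 1) < ⊤ :=
    ENNReal.rpow_lt_top_of_nonneg (by linarith) (by simp)
  refine ⟨C + 2 ^ (p + 1 - 1) * (1 + C), ?_, ?_⟩
  · exact ENNReal.add_lt_top.2 ⟨hC, ENNReal.mul_lt_top h2 (ENNReal.add_lt_top.2 ⟨by simp, hC⟩)⟩
  intro j v hv _
  have hN : (0 : ℝ) < 2 ^ j := by positivity
  simp only [← enorm_eq_nnnorm, div_eq_mul_inv]
  have h1 := h _ hN v hv
  set u := lpLe ⇑ψ ((2 : ℝ) ^ j) v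
  set I := ∫⁻ x : E3, ‖v x‖ₑ ^ (p + 1) * ‖x‖ₑ⁻¹
  have h3 : ∫⁻ x : E3, ‖v x - u x‖ₑ ^ (p + 1) * ‖x‖ₑ⁻¹ ≤ 2 ^ (p + 1 - 1) * (I + C * I) := by
    calc ∫⁻ x : E3, ‖v x - u x‖ₑ ^ (p + 1) * ‖x‖ₑ⁻¹
        ≤ ∫⁻ x : E3, 2 ^ (p + 1 - 1) * (‖v x‖ₑ ^ (p + 1) * ‖x‖ₑ⁻¹ + ‖u x‖ₑ ^ (p + 1) * ‖x‖ₑ⁻¹) := by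
          apply lintegral_mono
          intro x
          dsimp only
          rw [← add_mul, ← mul_assoc]
          gcongr
          refine le_trans ?_ (ENNReal.rpow_add_le_mul_rpow_add_rpow _ _ hq.le)
          exact ENNReal.rpow_le_rpow enorm_sub_le (by linarith)
      _ = 2 ^ (p + 1 - 1) * (I + ∫⁻ x : E3, ‖u x‖ₑ ^ (p + 1) * ‖x‖ₑ⁻¹) := by
          rw [lintegral_const_mul' _ _ h2.ne, lintegral_add_left (by fun_prop)]
      _ ≤ _ := by gcongr
  calc _ ≤ C * I + 2 ^ (p + 1 - 1) * (I + C * I) := add_le_add h1 h3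
    _ = _ := by ring

end
end

section
/- (Hyperbolic Morawetz estimate.) Let 3 < p < 5 and let ũ be a sufficiently smooth, decaying solution of (∂_ττ − ∂_ss − (2/s)∂_s) ũ + e^{−(p−3)τ}(s/sinh(s))^{p−1}|ũ|^{p−1}ũ = 0 for s > 0, on the time interval I = [0,T], with finite hyperbolic energy. Then ∫_0^T ∫₀^∞ e^{−(p−3)τ} (s/sinh(s))^{p−1} (cosh(s)/sinh(s)) |ũ(τ,s)|^{p+1} s² ds dτ ≤ C E(ũ)(0), where E(ũ)(τ) = ½∫₀^∞ (∂_s ũ)² s² ds + ½∫₀^∞ (∂_τ ũ)² s² ds + (1/(p+1))∫₀^∞ e^{−(p−3)τ}(s/sinh(s))^{p−1}|ũ|^{p+1} s² ds and C depends only on p. -/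
open MeasureTheory Real Set Filter Topology
open scoped FourierTransform ENNReal NNReal

noncomputable section

def hmH (p s : ℝ) : ℝ := (s / Real.sinh s) ^ (p - 1) * s ^ 2

def hmK (p s : ℝ) : ℝ := (s / Real.sinh s) ^ (p - 1) * (Real.cosh s / Real.sinh s) * s ^ 2

lemma hm_dslope_cont : Continuous (dslope Real.sinh 0) := by
  rw [← continuousOn_univ, continuousOn_dslope Filter.univ_mem]
  exact ⟨Real.continuous_sinh.continuousOn, Real.differentiable_sinh _⟩

lemma hm_sinh_eq (s : ℝ) : Real.sinh s = s * dslope Real.sinh 0 s := by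
  have := sub_smul_dslope Real.sinh 0 s
  simpa using this.symm

lemma hm_dslope_pos (s : ℝ) : 0 < dslope Real.sinh 0 s := by
  rcases lt_trichotomy s 0 with h | h | h
  · have h1 := Real.sinh_neg_iff.2 h
    rw [hm_sinh_eq] at h1
    nlinarith
  · subst h; simp
  · have h1 := Real.sinh_pos_iff.2 h
    rw [hm_sinh_eq] at h1
    nlinarith

lemma hmH_cont (p : ℝ) : Continuous (hmH p) := by
  have h : hmH p = fun s => ((dslope Real.sinh 0 s)⁻¹) ^ (p - 1) * s ^ 2 := by
    funext s
    unfold hmH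
    rcases eq_or_ne s 0 with rfl | hs
    · simp
    · congr 2
      rw [hm_sinh_eq]
      have := (hm_dslope_pos s).ne'
      field_simp
  rw [h]
  have h0 : ∀ s, dslope Real.sinh 0 s ≠ 0 := fun s => (hm_dslope_pos s).ne'
  exact ((hm_dslope_cont.inv₀ h0).rpow_const (fun s => Or.inl (inv_ne_zero (h0 s)))).mul
    (continuous_id.pow 2)

lemma hmK_cont (p : ℝ) : Continuous (hmK p) := by
  have h : hmK p = fun s => ((dslope Real.sinh 0 s)⁻¹) ^ (p - 1) *
      (Real.cosh s * (dslope Real.sinh 0 s)⁻¹ * s) := by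
    funext s
    unfold hmK
    rcases eq_or_ne s 0 with rfl | hs
    · simp
    · have h0 := (hm_dslope_pos s).ne'
      have h1 : s / Real.sinh s = (dslope Real.sinh 0 s)⁻¹ := by
        rw [hm_sinh_eq]; field_simp
      have h2 : Real.cosh s / Real.sinh s * s ^ 2 =
          Real.cosh s * (dslope Real.sinh 0 s)⁻¹ * s := by
        rw [hm_sinh_eq]; field_simp
      rw [h1, mul_assoc, h2]
  rw [h]
  have h0 : ∀ s, dslope Real.sinh 0 s ≠ 0 := fun s => (hm_dslope_pos s).ne'
  exact ((hm_dslope_cont.inv₀ h0).rpow_const (fun s => Or.inl (inv_ne_zero (h0 s)))).mul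
    ((Real.continuous_cosh.mul (hm_dslope_cont.inv₀ h0)).mul continuous_id)

lemma hmH_nonneg (p : ℝ) {s : ℝ} (hs : 0 ≤ s) : 0 ≤ hmH p s := by
  have := Real.sinh_nonneg_iff.2 hs
  unfold hmH; positivity

lemma hmK_nonneg (p : ℝ) {s : ℝ} (hs : 0 ≤ s) : 0 ≤ hmK p s := by
  have := Real.sinh_nonneg_iff.2 hs
  have := Real.cosh_pos s
  unfold hmK; positivity

lemma hmH_deriv (p : ℝ) {s : ℝ} (hs : 0 < s) :
    HasDerivAt (hmH p) ((p + 1) * ((s / Real.sinh s) ^ (p - 1) * s) - (p - 1) * hmK p s) s := by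
  have h1 := Real.sinh_pos_iff.2 hs
  have h2 : 0 < s / Real.sinh s := by positivity
  have h3 := (((hasDerivAt_id s).div (Real.hasDerivAt_sinh s) h1.ne').rpow_const (p := p - 1)
    (Or.inl h2.ne')).mul ((hasDerivAt_id s).pow 2)
  refine (h3.congr_deriv ?_)
  simp only [id, Pi.div_apply, Pi.pow_apply]
  have h4 : (s / Real.sinh s) ^ (p - 1 - 1) = (s / Real.sinh s) ^ (p - 1) * (Real.sinh s / s) := by
    rw [Real.rpow_sub_one h2.ne']
    field_simp
  unfold hmK
  rw [h4]
  generalize (s / Real.sinh s) ^ (p - 1) = A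
  field_simp
  simp
  ring

lemma hm_lineL {F : ℝ × ℝ → ℝ} {t s : ℝ} (h : DifferentiableAt ℝ F (t, s)) :
    HasDerivAt (fun x => F (x, s)) (fderiv ℝ F (t, s) (1, 0)) t :=
  HasFDerivAt.comp_hasDerivAt (f := fun x => (x, s)) t h.hasFDerivAt
    ((hasDerivAt_id t).prodMk (hasDerivAt_const t s))

lemma hm_lineR {F : ℝ × ℝ → ℝ} {t s : ℝ} (h : DifferentiableAt ℝ F (t, s)) :
    HasDerivAt (fun x => F (t, x)) (fderiv ℝ F (t, s) (0, 1)) s :=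
  HasFDerivAt.comp_hasDerivAt (f := fun x => (t, x)) s h.hasFDerivAt
    ((hasDerivAt_const s t).prodMk (hasDerivAt_id s))

/-- potential term -/
def hmP (p : ℝ) (V : ℝ × ℝ → ℝ) (z : ℝ × ℝ) : ℝ :=
  Real.exp (-(p - 3) * z.1) * hmH p z.2 * |V z| ^ (p + 1)

lemma hmP_cont {p : ℝ} (hp : 3 < p) {V : ℝ × ℝ → ℝ} (hV : Continuous V) :
    Continuous (hmP p V) := by
  unfold hmP
  exact ((by fun_prop : Continuous fun z : ℝ × ℝ => Real.exp (-(p - 3) * z.1)).mul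
    ((hmH_cont p).comp continuous_snd)).mul
    (hV.abs.rpow_const (fun z => Or.inr (by linarith)))

lemma hmP_diff {p : ℝ} (hp : 3 < p) {V : ℝ × ℝ → ℝ} (hV : Differentiable ℝ V) {z : ℝ × ℝ}
    (hz : 0 < z.2) : DifferentiableAt ℝ (hmP p V) z := by
  unfold hmP
  have h1 : DifferentiableAt ℝ (fun z : ℝ × ℝ => hmH p z.2) z :=
    DifferentiableAt.comp (g := hmH p) z (hmH_deriv p hz).differentiableAt differentiableAt_snd
  have h2 : DifferentiableAt ℝ (fun z : ℝ × ℝ => |V z| ^ (p + 1)) z :=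
    DifferentiableAt.comp (g := fun x : ℝ => |x| ^ (p + 1)) z
      (hasDerivAt_abs_rpow _ (by linarith)).differentiableAt (hV z)
  have h3 : DifferentiableAt ℝ (fun z : ℝ × ℝ => Real.exp (-(p - 3) * z.1)) z := by fun_prop
  exact (h3.mul h1).mul h2

lemma hmP_dL {p : ℝ} (hp : 3 < p) {V : ℝ × ℝ → ℝ} (hV : Differentiable ℝ V) (t s : ℝ)
    (hs : 0 < s) : fderiv ℝ (hmP p V) (t, s) (1, 0) =
      -(p - 3) * hmP p V (t, s) + Real.exp (-(p - 3) * t) * hmH p s *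
        ((p + 1) * (|V (t, s)| ^ (p - 1) * V (t, s)) * fderiv ℝ V (t, s) (1, 0)) := by
  have h0 := hm_lineL (hmP_diff hp hV (z := (t, s)) hs)
  have h1 : HasDerivAt (fun x => Real.exp (-(p - 3) * x))
      (Real.exp (-(p - 3) * t) * (-(p - 3) * 1)) t := ((hasDerivAt_id t).const_mul _).exp
  have h2 := HasDerivAt.comp (h₂ := fun x : ℝ => |x| ^ (p + 1)) t
    (hasDerivAt_abs_rpow (V (t, s)) (p := p + 1) (by linarith)) (hm_lineL (hV (t, s)))
  have h3 := (h1.mul_const (hmH p s)).mul h2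
  rw [h0.unique h3]
  simp only [hmP, Function.comp]
  rw [show p + 1 - 2 = p - 1 by ring]
  ring

lemma hmP_dR {p : ℝ} (hp : 3 < p) {V : ℝ × ℝ → ℝ} (hV : Differentiable ℝ V) (t s : ℝ)
    (hs : 0 < s) : fderiv ℝ (hmP p V) (t, s) (0, 1) =
      Real.exp (-(p - 3) * t) * ((p + 1) * ((s / Real.sinh s) ^ (p - 1) * s) -
        (p - 1) * hmK p s) * |V (t, s)| ^ (p + 1) +
      Real.exp (-(p - 3) * t) * hmH p s *
        ((p + 1) * (|V (t, s)| ^ (p - 1) * V (t, s)) * fderiv ℝ V (t, s) (0, 1)) := by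
  have h0 := hm_lineR (hmP_diff hp hV (z := (t, s)) hs)
  have h2 := HasDerivAt.comp (h₂ := fun x : ℝ => |x| ^ (p + 1)) s
    (hasDerivAt_abs_rpow (V (t, s)) (p := p + 1) (by linarith)) (hm_lineR (hV (t, s)))
  have h3 := (((hmH_deriv p hs).const_mul (Real.exp (-(p - 3) * t)))).mul h2
  rw [h0.unique h3]
  simp only [Function.comp]
  rw [show p + 1 - 2 = p - 1 by ring]
  ring

lemma hm_abs_pow {p : ℝ} (hp : 3 < p) (x : ℝ) :
    |x| ^ (p + 1) = |x| ^ (p - 1) * x * x := by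
  rw [show p + 1 = (p - 1) + 2 by ring, Real.rpow_add_of_nonneg (abs_nonneg x) (by linarith)
    (by norm_num), Real.rpow_two, sq_abs]
  ring

lemma hm_Ioi {f : ℝ → ℝ} {R : ℝ} (hR : 0 ≤ R) (h : ∀ s, R < s → f s = 0) :
    ∫ s in Set.Ioi (0 : ℝ), f s = ∫ s in (0 : ℝ)..R, f s := by
  rw [intervalIntegral.integral_of_le hR]
  refine setIntegral_eq_of_subset_of_forall_sdiff_eq_zero measurableSet_Ioi
    (fun x hx => hx.1) (fun x hx => h x ?_)
  by_contra hc
  exact hx.2 ⟨hx.1, not_lt.1 hc⟩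

/-- W = w_τ + w_s -/
def hmW (V : ℝ × ℝ → ℝ) (z : ℝ × ℝ) : ℝ :=
  z.2 * (fderiv ℝ V z (1, 0) + fderiv ℝ V z (0, 1)) + V z

lemma hm_core {p : ℝ} (hp : 3 < p) {V : ℝ × ℝ → ℝ} (hV : ContDiff ℝ 2 V) {T R : ℝ}
    (hT : 0 < T) (hR : 0 < R) (h0 : ∀ t s, R < s + 1 → V (t, s) = 0)
    (heq : ∀ t ∈ Set.Icc (0 : ℝ) T, ∀ s, 0 < s →
      fderiv ℝ (fun z => fderiv ℝ V z (1, 0)) (t, s) (1, 0)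
        - fderiv ℝ (fun z => fderiv ℝ V z (0, 1)) (t, s) (0, 1)
        - (2 / s) * fderiv ℝ V (t, s) (0, 1) +
        Real.exp (-(p - 3) * t) * (s / Real.sinh s) ^ (p - 1) *
          (|V (t, s)| ^ (p - 1) * V (t, s)) = 0) :
    (p - 1) / (p + 1) * (∫ t in (0 : ℝ)..T, ∫ s in (0 : ℝ)..R,
      Real.exp (-(p - 3) * t) * hmK p s * |V (t, s)| ^ (p + 1)) ≤
    ∫ s in (0 : ℝ)..R, ((1 / 2) * hmW V (0, s) ^ 2 + (1 / (p + 1)) * hmP p V (0, s)) := by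
  have hVd : Differentiable ℝ V := hV.differentiable (by norm_num)
  have hVc := hVd.continuous
  have hF : ContDiff ℝ 1 (fderiv ℝ V) := hV.fderiv_right (by norm_num)
  have hFd : Differentiable ℝ (fderiv ℝ V) := hF.differentiable (by norm_num)
  have hV1 : ContDiff ℝ 1 (fun z => fderiv ℝ V z (1, 0)) := hF.clm_apply contDiff_const
  have hV2 : ContDiff ℝ 1 (fun z => fderiv ℝ V z (0, 1)) := hF.clm_apply contDiff_const
  have hWC : ContDiff ℝ 1 (hmW V) :=
    (contDiff_snd.mul (hV1.add hV2)).add (hV.of_le (by norm_num))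
  have hWd : Differentiable ℝ (hmW V) := hWC.differentiable (by norm_num)
  have hPc := hmP_cont hp hVc
  have hQc : Continuous (fun z : ℝ × ℝ =>
      Real.exp (-(p - 3) * z.1) * hmK p z.2 * |V z| ^ (p + 1)) :=
    ((by fun_prop : Continuous fun z : ℝ × ℝ => Real.exp (-(p - 3) * z.1)).mul
      ((hmK_cont p).comp continuous_snd)).mul
      (hVc.abs.rpow_const (fun z => Or.inr (by linarith)))
  have hsymm : ∀ z, fderiv ℝ (fun z => fderiv ℝ V z (1, 0)) z (0, 1) =
      fderiv ℝ (fun z => fderiv ℝ V z (0, 1)) z (1, 0) := by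
    intro z
    have hs := (hV.contDiffAt (x := z)).isSymmSndFDerivAt (by simp)
    have e1 : ∀ u w, fderiv ℝ (fun z => fderiv ℝ V z u) z w =
        fderiv ℝ (fderiv ℝ V) z w u := by
      intro u w
      rw [fderiv_clm_apply (hFd z) (differentiableAt_const u)]
      simp
    rw [e1, e1]
    exact hs _ _
  -- derivatives of W
  have hWL : ∀ t s, fderiv ℝ (hmW V) (t, s) (1, 0) =
      s * (fderiv ℝ (fun z => fderiv ℝ V z (1, 0)) (t, s) (1, 0) +
        fderiv ℝ (fun z => fderiv ℝ V z (0, 1)) (t, s) (1, 0)) + fderiv ℝ V (t, s) (1, 0) := by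
    intro t s
    have a1 := hm_lineL (hV1.differentiable (by norm_num) (t, s))
    have a2 := hm_lineL (hV2.differentiable (by norm_num) (t, s))
    exact (hm_lineL (hWd (t, s))).unique (((a1.add a2).const_mul s).add (hm_lineL (hVd (t, s))))
  have hWR : ∀ t s, fderiv ℝ (hmW V) (t, s) (0, 1) =
      1 * (fderiv ℝ V (t, s) (1, 0) + fderiv ℝ V (t, s) (0, 1)) +
      s * (fderiv ℝ (fun z => fderiv ℝ V z (1, 0)) (t, s) (0, 1) +
        fderiv ℝ (fun z => fderiv ℝ V z (0, 1)) (t, s) (0, 1)) + fderiv ℝ V (t, s) (0, 1) := by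
    intro t s
    have a1 := hm_lineR (hV1.differentiable (by norm_num) (t, s))
    have a2 := hm_lineR (hV2.differentiable (by norm_num) (t, s))
    exact (hm_lineR (hWd (t, s))).unique
      (((hasDerivAt_id s).mul (a1.add a2)).add (hm_lineR (hVd (t, s))))
  set f : ℝ × ℝ → ℝ := fun z => (1 / 2) * hmW V z ^ 2 + (1 / (p + 1)) * hmP p V z with hf
  set g : ℝ × ℝ → ℝ := fun z => -((1 / 2) * hmW V z ^ 2) + (1 / (p + 1)) * hmP p V z with hg
  have hfc : Continuous f := ((hWd.continuous.pow 2).const_mul _).add (hPc.const_mul _)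
  have hgc : Continuous g := ((hWd.continuous.pow 2).const_mul _).neg.add (hPc.const_mul _)
  have hfd : ∀ z : ℝ × ℝ, 0 < z.2 → HasFDerivAt f
      ((1 / 2 : ℝ) • (((2 : ℕ) • hmW V z ^ (2 - 1)) • fderiv ℝ (hmW V) z) +
        (1 / (p + 1)) • fderiv ℝ (hmP p V) z) z := fun z hz =>
    (((hWd z).hasFDerivAt.pow 2).const_mul _).add ((hmP_diff hp hVd hz).hasFDerivAt.const_mul _)
  have hgd : ∀ z : ℝ × ℝ, 0 < z.2 → HasFDerivAt g
      (-((1 / 2 : ℝ) • (((2 : ℕ) • hmW V z ^ (2 - 1)) • fderiv ℝ (hmW V) z)) +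
        (1 / (p + 1)) • fderiv ℝ (hmP p V) z) z := fun z hz =>
    (((hWd z).hasFDerivAt.pow 2).const_mul _).neg.add
      ((hmP_diff hp hVd hz).hasFDerivAt.const_mul _)
  set f' : ℝ × ℝ → ℝ × ℝ →L[ℝ] ℝ := fun z => if 0 < z.2 then fderiv ℝ f z else 0 with hf'
  set g' : ℝ × ℝ → ℝ × ℝ →L[ℝ] ℝ := fun z => if 0 < z.2 then fderiv ℝ g z else 0 with hg'
  set Q : ℝ × ℝ → ℝ := fun z => -((p - 3) / (p + 1) * hmP p V z) - (p - 1) / (p + 1) *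
    (Real.exp (-(p - 3) * z.1) * hmK p z.2 * |V z| ^ (p + 1)) with hQ
  have hQcc : Continuous Q := (hPc.const_mul _).neg.sub (hQc.const_mul _)
  have hdiv : ∀ t ∈ Set.Icc (0 : ℝ) T, ∀ s, 0 ≤ s →
      f' (t, s) (1, 0) + g' (t, s) (0, 1) = Q (t, s) := by
    intro t ht s hs
    rcases hs.eq_or_lt with rfl | hs
    · simp [hf', hg', hQ, hmP, hmK, hmH]
    · have e := heq t ht s hs
      simp only [hf', hg', hs, if_true]
      rw [(hfd (t, s) hs).fderiv, (hgd (t, s) hs).fderiv]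
      simp only [ContinuousLinearMap.add_apply, ContinuousLinearMap.neg_apply,
        ContinuousLinearMap.smul_apply, smul_eq_mul, nsmul_eq_mul]
      rw [hWL, hWR, hsymm, hmP_dL hp hVd t s hs, hmP_dR hp hVd t s hs]
      simp only [hQ, hmW, hmP]
      rw [hm_abs_pow hp]
      have hp1 : p + 1 ≠ 0 := by linarith
      simp only [hmH]
      generalize fderiv ℝ (fun z => fderiv ℝ V z (1, 0)) (t, s) (1, 0) = V11 at *
      generalize fderiv ℝ (fun z => fderiv ℝ V z (0, 1)) (t, s) (1, 0) = V12 at *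
      generalize fderiv ℝ (fun z => fderiv ℝ V z (0, 1)) (t, s) (0, 1) = V22 at *
      generalize fderiv ℝ V (t, s) (1, 0) = V1 at *
      generalize fderiv ℝ V (t, s) (0, 1) = V2 at *
      generalize V (t, s) = v at *
      generalize |v| ^ (p - 1) = B at *
      generalize (s / Real.sinh s) ^ (p - 1) = A at *
      generalize Real.exp (-(p - 3) * t) = ex at *
      generalize hmK p s = K at *
      have e' : V11 = V22 + (2 / s) * V2 - ex * A * (B * v) := by linarith
      rw [e']
      push_cast
      field_simp
      ring
  have key := integral2_divergence_prod_of_hasFDerivAt_off_countable f g f' g' 0 0 T R ∅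
    Set.countable_empty hfc.continuousOn hgc.continuousOn
    (by
      rintro z ⟨⟨-, hz⟩, -⟩
      have : 0 < z.2 := by simpa [hR.le] using hz.1
      simp only [hf', this, if_true]
      exact (hfd z this).differentiableAt.hasFDerivAt)
    (by
      rintro z ⟨⟨-, hz⟩, -⟩
      have : 0 < z.2 := by simpa [hR.le] using hz.1
      simp only [hg', this, if_true]
      exact (hgd z this).differentiableAt.hasFDerivAt)
    (by
      have hi : IntegrableOn Q (Set.uIcc 0 T ×ˢ Set.uIcc 0 R) :=
        hQcc.continuousOn.integrableOn_compact (isCompact_uIcc.prod isCompact_uIcc)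
      refine hi.congr_fun ?_ (measurableSet_uIcc.prod measurableSet_uIcc)
      rintro ⟨t, s⟩ ⟨ht, hs⟩
      rw [Set.uIcc_of_le hT.le] at ht
      rw [Set.uIcc_of_le hR.le] at hs
      exact (hdiv t ht s hs.1).symm)
  have key2 : (∫ x in (0 : ℝ)..T, ∫ y in (0 : ℝ)..R, f' (x, y) (1, 0) + g' (x, y) (0, 1)) =
      ∫ x in (0 : ℝ)..T, ∫ y in (0 : ℝ)..R, Q (x, y) := by
    refine intervalIntegral.integral_congr fun t ht => ?_
    refine intervalIntegral.integral_congr fun s hs => ?_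
    rw [Set.uIcc_of_le hT.le] at ht
    rw [Set.uIcc_of_le hR.le] at hs
    exact hdiv t ht s hs.1
  rw [key2] at key
  have hgR : ∀ t, g (t, R) = 0 := by
    intro t
    have hev : V =ᶠ[𝓝 (t, R)] fun _ => 0 := by
      have : {z : ℝ × ℝ | R < z.2 + 1} ∈ 𝓝 (t, R) :=
        (isOpen_lt continuous_const (by fun_prop)).mem_nhds (by simp)
      filter_upwards [this] with z hz
      exact h0 z.1 z.2 hz
    have hfz : fderiv ℝ V (t, R) = 0 := by
      rw [hev.fderiv_eq]; simp
    have hz := hev.eq_of_nhds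
    have hp1 : p + 1 ≠ 0 := by linarith
    simp [hg, hmW, hmP, hfz, hz, hp1]
  have hg0 : ∀ t, g (t, 0) ≤ 0 := by
    intro t
    simp only [hg, hmP, hmH]
    simp
    positivity
  have i1 : (∫ x in (0 : ℝ)..T, g (x, R)) = 0 := by simp [hgR]
  have i2 : (∫ x in (0 : ℝ)..T, g (x, 0)) ≤ 0 := by
    have := intervalIntegral.integral_mono_on (μ := volume) hT.le
      ((hgc.comp (by fun_prop : Continuous fun x : ℝ => (x, (0 : ℝ)))).intervalIntegrable 0 T)
      (intervalIntegrable_const (c := (0 : ℝ))) (fun x _ => hg0 x)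
    simpa using this
  have hPnn : ∀ t s, 0 ≤ s → 0 ≤ hmP p V (t, s) := fun t s hs => by
    have := hmH_nonneg p hs
    simp only [hmP]; positivity
  have i3 : 0 ≤ ∫ y in (0 : ℝ)..R, f (T, y) := by
    refine intervalIntegral.integral_nonneg hR.le fun s hs => ?_
    have := hPnn T s hs.1
    have : 0 < p + 1 := by linarith
    simp only [hf]; positivity
  have i4 : (p - 1) / (p + 1) * (∫ t in (0 : ℝ)..T, ∫ s in (0 : ℝ)..R,
      Real.exp (-(p - 3) * t) * hmK p s * |V (t, s)| ^ (p + 1)) ≤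
      - ∫ x in (0 : ℝ)..T, ∫ y in (0 : ℝ)..R, Q (x, y) := by
    simp only [← intervalIntegral.integral_const_mul, ← intervalIntegral.integral_neg]
    have cont2 : ∀ {G : ℝ × ℝ → ℝ}, Continuous G →
        Continuous fun t => ∫ s in (0 : ℝ)..R, G (t, s) := fun {G} hG =>
      intervalIntegral.continuous_parametric_intervalIntegral_of_continuous'
        (f := fun t s => G (t, s)) (by simpa [Function.uncurry_def] using hG) 0 R
    refine intervalIntegral.integral_mono_on hT.le
      ((cont2 (hQc.const_mul ((p - 1) / (p + 1)))).intervalIntegrable 0 T)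
      ((cont2 hQcc.neg).intervalIntegrable 0 T) fun t _ => ?_
    have hl : Continuous fun s : ℝ => (t, s) := by fun_prop
    refine intervalIntegral.integral_mono_on hR.le
      (((hQc.const_mul ((p - 1) / (p + 1))).comp hl).intervalIntegrable 0 R)
      ((hQcc.neg.comp hl).intervalIntegrable 0 R) fun s hs => ?_
    have h1 := hPnn t s hs.1
    have h2 : 0 ≤ (p - 3) / (p + 1) := div_nonneg (by linarith) (by linarith)
    have h3 := mul_nonneg h2 h1
    simp only [hQ]
    linarith
  have i5 : (∫ y in (0 : ℝ)..R, f (0, y)) = ∫ s in (0 : ℝ)..R,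
    ((1 / 2) * hmW V (0, s) ^ 2 + (1 / (p + 1)) * hmP p V (0, s)) := rfl
  linarith

/-- Hyperbolic Morawetz estimate: for a sufficiently smooth, decaying
solution `ũ` of the equation in hyperbolic coordinates on `[0,T]`,
`∫_0^T ∫ e^{-(p-3)τ}(s/sinh s)^{p-1}(cosh s/sinh s)|ũ|^{p+1} s² ds dτ ≤ C E(ũ)(0)`, with `C`
depending only on `p`. -/
theorem hyperbolic_morawetz (p : ℝ) (hp3 : 3 < p) (hp5 : p < 5) :
    ∃ C : ℝ, 0 < C ∧
      ∀ (T : ℝ), 0 < T → ∀ v : ℝ → ℝ → ℝ,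
        ContDiff ℝ 2 (fun z : ℝ × ℝ => v z.1 z.2) →
        (∃ R : ℝ, ∀ τ s : ℝ, R ≤ s → v τ s = 0) →
        (∀ τ ∈ Set.Icc (0 : ℝ) T, ∀ s : ℝ, 0 < s →
          timeDeriv2 v τ s - deriv (deriv (v τ)) s - (2 / s) * deriv (v τ) s +
            Real.exp (-(p - 3) * τ) * (s / Real.sinh s) ^ (p - 1) *
              (|v τ s| ^ (p - 1) * v τ s) = 0) →
        (∫ τ in Set.Icc (0 : ℝ) T, ∫ s in Set.Ioi (0 : ℝ),
            Real.exp (-(p - 3) * τ) * (s / Real.sinh s) ^ (p - 1) *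
              (Real.cosh s / Real.sinh s) * |v τ s| ^ (p + 1) * s ^ 2) ≤
          C * hypEnergy p v 0 := by
  have hp1 : 0 < p + 1 := by linarith
  have hpm : 0 < p - 1 := by linarith
  refine ⟨2 * ((p + 1) / (p - 1)), by positivity, ?_⟩
  rintro T hT v hV ⟨R0, hR0⟩ heq
  set V : ℝ × ℝ → ℝ := fun z => v z.1 z.2 with hVdef
  have hVd : Differentiable ℝ V := hV.differentiable (by norm_num)
  have hF : ContDiff ℝ 1 (fderiv ℝ V) := hV.fderiv_right (by norm_num)
  have hV1 : ContDiff ℝ 1 (fun z => fderiv ℝ V z (1, 0)) := hF.clm_apply contDiff_const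
  have hV2 : ContDiff ℝ 1 (fun z => fderiv ℝ V z (0, 1)) := hF.clm_apply contDiff_const
  have d1 : ∀ t s, timeDeriv v t s = fderiv ℝ V (t, s) (1, 0) := fun t s =>
    (hm_lineL (hVd (t, s))).deriv
  have d2 : ∀ t s, deriv (v t) s = fderiv ℝ V (t, s) (0, 1) := fun t s =>
    (hm_lineR (hVd (t, s))).deriv
  have d11 : ∀ t s, timeDeriv2 v t s =
      fderiv ℝ (fun z => fderiv ℝ V z (1, 0)) (t, s) (1, 0) := fun t s => by
    rw [← (hm_lineL (hV1.differentiable (by norm_num) (t, s))).deriv]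
    simp only [timeDeriv2]
    conv_lhs => rw [timeDeriv]
    simp only [d1]
  have d22 : ∀ t s, deriv (deriv (v t)) s =
      fderiv ℝ (fun z => fderiv ℝ V z (0, 1)) (t, s) (0, 1) := fun t s => by
    rw [← (hm_lineR (hV2.differentiable (by norm_num) (t, s))).deriv]
    congr 1
    funext x
    exact d2 t x
  set R : ℝ := max R0 0 + 1 with hRdef
  have hR : 0 < R := by positivity
  have hvz : ∀ t s, R < s + 1 → v t s = 0 := fun t s h =>
    hR0 t s (by have := le_max_left R0 0; linarith)
  have hev : ∀ t s, R ≤ s → fderiv ℝ V (t, s) = 0 := by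
    intro t s hs
    have hev : V =ᶠ[𝓝 (t, s)] fun _ => 0 := by
      have : {z : ℝ × ℝ | R < z.2 + 1} ∈ 𝓝 (t, s) :=
        (isOpen_lt continuous_const (by fun_prop)).mem_nhds
          (by simp only [Set.mem_ofPred_eq]; linarith)
      filter_upwards [this] with z hz
      exact hvz z.1 z.2 hz
    rw [hev.fderiv_eq]; simp
  have core := hm_core hp3 hV hT hR hvz (fun t ht s hs => by
    have := heq t ht s hs
    rwa [d11, d22, d2] at this)
  have hLHS : (∫ τ in Set.Icc (0 : ℝ) T, ∫ s in Set.Ioi (0 : ℝ),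
            Real.exp (-(p - 3) * τ) * (s / Real.sinh s) ^ (p - 1) *
              (Real.cosh s / Real.sinh s) * |v τ s| ^ (p + 1) * s ^ 2) =
      ∫ t in (0 : ℝ)..T, ∫ s in (0 : ℝ)..R,
      Real.exp (-(p - 3) * t) * hmK p s * |V (t, s)| ^ (p + 1) := by
    rw [intervalIntegral.integral_of_le hT.le, integral_Icc_eq_integral_Ioc]
    congr 1
    funext t
    rw [hm_Ioi hR.le (fun s hs => by
      rw [hvz t s (by linarith), abs_zero, Real.zero_rpow hp1.ne']; ring)]
    congr 1
    funext s
    simp only [hmK, hVdef]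
    ring
  have hE1 : (∫ s in Set.Ioi (0 : ℝ), (deriv (v 0) s) ^ 2 * s ^ 2) =
      ∫ s in (0 : ℝ)..R, (s * fderiv ℝ V (0, s) (0, 1)) ^ 2 := by
    rw [hm_Ioi hR.le (fun s hs => by rw [d2, hev 0 s hs.le]; simp)]
    congr 1
    funext s
    rw [d2]; ring
  have hE2 : (∫ s in Set.Ioi (0 : ℝ), (timeDeriv v 0 s) ^ 2 * s ^ 2) =
      ∫ s in (0 : ℝ)..R, (s * fderiv ℝ V (0, s) (1, 0)) ^ 2 := by
    rw [hm_Ioi hR.le (fun s hs => by rw [d1, hev 0 s hs.le]; simp)]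
    congr 1
    funext s
    rw [d1]; ring
  have hE3 : (∫ s in Set.Ioi (0 : ℝ),
      Real.exp (-(p - 3) * 0) * (s / Real.sinh s) ^ (p - 1) * |v 0 s| ^ (p + 1) * s ^ 2) =
      ∫ s in (0 : ℝ)..R, hmP p V (0, s) := by
    rw [hm_Ioi hR.le (fun s hs => by
      rw [hvz 0 s (by linarith), abs_zero, Real.zero_rpow hp1.ne']; ring)]
    congr 1
    funext s
    simp only [hmP, hmH, hVdef]
    ring
  have hl : Continuous fun s : ℝ => ((0 : ℝ), s) := by fun_prop
  have c0 : Continuous fun s : ℝ => V (0, s) := hVd.continuous.comp hl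
  have c1 : Continuous fun s : ℝ => fderiv ℝ V (0, s) (1, 0) := hV1.continuous.comp hl
  have c2 : Continuous fun s : ℝ => fderiv ℝ V (0, s) (0, 1) := hV2.continuous.comp hl
  have cP : Continuous fun s : ℝ => hmP p V (0, s) := (hmP_cont hp3 hVd.continuous).comp hl
  -- integration by parts
  have hbp : (∫ s in (0 : ℝ)..R, (V (0, s) ^ 2 +
      2 * s * V (0, s) * fderiv ℝ V (0, s) (0, 1))) = 0 := by
    rw [intervalIntegral.integral_eq_sub_of_hasDerivAt (f := fun s => s * V (0, s) ^ 2)]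
    · have : V (0, R) = 0 := hvz 0 R (by linarith)
      simp [this]
    · intro s _
      refine ((hasDerivAt_id s).mul ((hm_lineR (hVd (0, s))).pow 2)).congr_deriv ?_
      simp only [id, Pi.pow_apply]
      push_cast
      ring
    · exact Continuous.intervalIntegrable (by fun_prop) 0 R
  have hmaj : (∫ s in (0 : ℝ)..R, ((1 / 2) * hmW V (0, s) ^ 2 + (1 / (p + 1)) * hmP p V (0, s))) ≤
      ∫ s in (0 : ℝ)..R, ((s * fderiv ℝ V (0, s) (0, 1)) ^ 2 +
        (s * fderiv ℝ V (0, s) (1, 0)) ^ 2 + 2 * (1 / (p + 1)) * hmP p V (0, s) +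
        (V (0, s) ^ 2 + 2 * s * V (0, s) * fderiv ℝ V (0, s) (0, 1))) := by
    refine intervalIntegral.integral_mono_on hR.le
      (Continuous.intervalIntegrable (by unfold hmW; fun_prop) 0 R)
      (Continuous.intervalIntegrable (by fun_prop) 0 R) fun s hs => ?_
    have hP : 0 ≤ (1 / (p + 1)) * hmP p V (0, s) := by
      have := hmH_nonneg p hs.1
      simp only [hmP]; positivity
    simp only [hmW]
    nlinarith [sq_nonneg (s * fderiv ℝ V (0, s) (0, 1) + V (0, s) -
      s * fderiv ℝ V (0, s) (1, 0))]
  have h1 := core.trans hmaj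
  rw [intervalIntegral.integral_add (Continuous.intervalIntegrable (by fun_prop) 0 R)
      (Continuous.intervalIntegrable (by fun_prop) 0 R),
    intervalIntegral.integral_add (Continuous.intervalIntegrable (by fun_prop) 0 R)
      (Continuous.intervalIntegrable (by fun_prop) 0 R),
    intervalIntegral.integral_add (Continuous.intervalIntegrable (by fun_prop) 0 R)
      (Continuous.intervalIntegrable (by fun_prop) 0 R),
    intervalIntegral.integral_const_mul, hbp] at h1
  rw [hLHS]
  unfold hypEnergy
  rw [hE1, hE2, hE3]
  rw [div_mul_eq_mul_div, div_le_iff₀ hp1] at h1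
  rw [mul_assoc, mul_comm, mul_assoc, div_mul_eq_mul_div, le_div_iff₀ hpm]
  linarith

end
end
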